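/- arXiv:1109.4353 — 2 statements merged into one kernel-verified Lean document; each statement's English description precedes it below -/
import Mathlib

section
/- Let a : Σ → ℕ be an arity and R an algebraic conditional rewrite system respecting a. For every i ∈ ℕ, if t ∈ AN_a and t →*_{β ∪ R(β)_i} u, then u ∈ AN_a and βnf(t) →*_{R_i} βnf(u). -/
/-!
The projection rests on a normalization argument that works for terms which are only weakly
β-normalizing: a term `t` has the β-normal form `n` iff leftmost-outermost reduction leads from
`t` to `n`, and this is recorded by a big-step derivation `BS k b t n` of size `k`. That every
β-normal form is reached this way (`BnfProj.BS.of_isBnf`) follows from the standardization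
theorem (`BnfProj.St.of_betaStar`), proved with Kashima's inductive characterization of standard
reductions. As big-step normalization is deterministic (`BnfProj.BS.det`), uniqueness of β-normal
forms, and hence invariance of `AN_a` under β-reduction, needs no separate confluence proof.

Steps of `→_{β ∪ R(β)_i}` are embedded in a parallel reduction `PB` contracting β-redexes and
conditional redexes at once. By strong induction on the size of the normalization derivation of
`t` (`BnfProj.proj_PB`), a parallel step `t ▷ u` projects to `→*_{R_i}` on normal forms:

* a weak head step `t →h t'` commutes with `▷`, because a conditional redex is headed by a symbol
  and so does not lie on the spine of a β-redex; the induction hypothesis applies to `t'`;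
* if `t = h t₁ … tₘ` with `h` a variable or a symbol, either all work happens in the arguments, or
  a conditional redex `lσ` sits on the spine. It has exactly `a f` arguments, so, the normal form
  of `t` respecting `a`, it is the whole of `t`. Since `l` is algebraic and not a variable, the
  normal form of `lσ` is `lν` with `ν` the pointwise normal form of `σ`, obtained by strictly
  smaller derivations. For `σ ▷ τ` with pointwise normal form `μ` of `τ`, the induction hypothesis
  gives `ν →* μ`, and `rμ` is the normal form of `rτ` as `r` is algebraic. Hence
  `lν → rν →* rμ`, where the first step is legitimate because the conditions, algebraic as well,
  remain joinable on normal forms by the projection property one stratum below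
  (`BnfProj.condRel_of_rooted`).
-/

set_option autoImplicit false

/-- λ-terms over a signature `Sig`, in de Bruijn representation
(terms are identified up to α-conversion). -/
inductive Tm (Sig : Type) : Type
  | var : ℕ → Tm Sig
  | app : Tm Sig → Tm Sig → Tm Sig
  | lam : Tm Sig → Tm Sig
  | sym : Sig → Tm Sig

namespace Tm

variable {Sig : Type}

/-- Shift the free de Bruijn indices `≥ d` up by one. -/
def lift (d : ℕ) : Tm Sig → Tm Sig
  | var n => if n < d then var n else var (n + 1)
  | app t u => app (lift d t) (lift d u)
  | lam t => lam (lift (d + 1) t)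
  | sym f => sym f

/-- Lift a parallel substitution under one binder. -/
def up (σ : ℕ → Tm Sig) : ℕ → Tm Sig
  | 0 => var 0
  | n + 1 => lift 0 (σ n)

/-- Capture-avoiding (parallel) substitution. -/
def subst (σ : ℕ → Tm Sig) : Tm Sig → Tm Sig
  | var n => σ n
  | app t u => app (subst σ t) (subst σ u)
  | lam t => lam (subst (up σ) t)
  | sym f => sym f

def scons (u : Tm Sig) (σ : ℕ → Tm Sig) : ℕ → Tm Sig
  | 0 => u
  | n + 1 => σ n

/-- `subst1 u t` substitutes `u` for the de Bruijn variable `0` in `t`. -/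
def subst1 (u t : Tm Sig) : Tm Sig := subst (scons u var) t

/-- `FVar t n` : de Bruijn index `n` occurs free in `t`. -/
def FVar : Tm Sig → ℕ → Prop
  | var m, n => m = n
  | app t u, n => FVar t n ∨ FVar u n
  | lam t, n => FVar t (n + 1)
  | sym _, _ => False

/-- Closed terms. -/
def ClosedTm (t : Tm Sig) : Prop := ∀ n, ¬ FVar t n

def countVar : Tm Sig → ℕ → ℕ
  | var m, n => if m = n then 1 else 0
  | app t u, n => countVar t n + countVar u n
  | lam t, n => countVar t (n + 1)
  | sym _, _ => 0

/-- Linear terms: each variable occurs at most once. -/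
def LinearTm (t : Tm Sig) : Prop := ∀ n, countVar t n ≤ 1

/-- `appList h [t1, …, tn] = h t1 … tn`. -/
def appList (h : Tm Sig) : List (Tm Sig) → Tm Sig
  | [] => h
  | u :: us => appList (app h u) us

/-- Applicative terms: terms containing no abstraction. -/
inductive Applicative : Tm Sig → Prop
  | var (n : ℕ) : Applicative (var n)
  | sym (f : Sig) : Applicative (sym f)
  | app {t u : Tm Sig} : Applicative t → Applicative u → Applicative (app t u)

/-- Algebraic terms: `t ::= x | f t1 … tn`. -/
inductive Algebraic : Tm Sig → Prop
  | var (n : ℕ) : Algebraic (var n)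
  | symApp (f : Sig) (ts : List (Tm Sig)) :
      (∀ t ∈ ts, Algebraic t) → Algebraic (appList (sym f) ts)

/-- `Subterm s t` : `s` is a subterm of `t`. -/
inductive Subterm : Tm Sig → Tm Sig → Prop
  | refl (t : Tm Sig) : Subterm t t
  | appL {s t u : Tm Sig} : Subterm s t → Subterm s (app t u)
  | appR {s t u : Tm Sig} : Subterm s u → Subterm s (app t u)
  | lam {s t : Tm Sig} : Subterm s t → Subterm s (lam t)

/-- `lamN m t = λ…λ.t` with `m` abstractions. -/
def lamN : ℕ → Tm Sig → Tm Sig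
  | 0, t => t
  | m + 1, t => lam (lamN m t)

end Tm

/-- β-reduction: the smallest rewrite relation (closed under abstraction, left and
right application and substitution) with `(λ.t) u →β t[0 := u]`. -/
inductive Beta {Sig : Type} : Tm Sig → Tm Sig → Prop
  | beta (t u : Tm Sig) : Beta (Tm.app (Tm.lam t) u) (Tm.subst1 u t)
  | abs {t u : Tm Sig} : Beta t u → Beta (Tm.lam t) (Tm.lam u)
  | appL {t u v : Tm Sig} : Beta t u → Beta (Tm.app t v) (Tm.app u v)
  | appR {t u v : Tm Sig} : Beta t u → Beta (Tm.app v t) (Tm.app v u)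
  | substC (σ : ℕ → Tm Sig) {t u : Tm Sig} : Beta t u → Beta (Tm.subst σ t) (Tm.subst σ u)

/-- Tait–Martin-Löf parallel β-reduction: the smallest parallel rewrite relation
with `(λ.t₁) t₂ ▷β u₁[0 := u₂]` whenever `t₁ ▷β u₁` and `t₂ ▷β u₂`. -/
inductive PBeta {Sig : Type} : Tm Sig → Tm Sig → Prop
  | var (n : ℕ) : PBeta (Tm.var n) (Tm.var n)
  | sym (f : Sig) : PBeta (Tm.sym f) (Tm.sym f)
  | app {t₁ u₁ t₂ u₂ : Tm Sig} : PBeta t₁ u₁ → PBeta t₂ u₂ →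
      PBeta (Tm.app t₁ t₂) (Tm.app u₁ u₂)
  | abs {t u : Tm Sig} : PBeta t u → PBeta (Tm.lam t) (Tm.lam u)
  | substC (σ : ℕ → Tm Sig) {t u : Tm Sig} : PBeta t u → PBeta (Tm.subst σ t) (Tm.subst σ u)
  | beta {t₁ u₁ t₂ u₂ : Tm Sig} : PBeta t₁ u₁ → PBeta t₂ u₂ →
      PBeta (Tm.app (Tm.lam t₁) t₂) (Tm.subst1 u₂ u₁)

/-- β-normal forms. -/
def BetaNormal {Sig : Type} (t : Tm Sig) : Prop := ∀ u, ¬ Beta t u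

/-- `IsBnf t n` : `n` is a β-normal form of `t`. -/
def IsBnf {Sig : Type} (t n : Tm Sig) : Prop :=
  Relation.ReflTransGen Beta t n ∧ BetaNormal n

/-- Weakly β-normalizing terms. -/
def WNbeta {Sig : Type} (t : Tm Sig) : Prop := ∃ n, IsBnf t n

/-- Conditional rewrite rule `d1 = c1 ∧ … ∧ dn = cn ⊃ l ↦ r`:  every variable of
the `di`, `ci` and `r` occurs in `l`, and `l` is a non-variable algebraic term. -/
structure CondRule (Sig : Type) where
  conds : List (Tm Sig × Tm Sig)
  lhs : Tm Sig
  rhs : Tm Sig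
  lhs_alg : Tm.Algebraic lhs
  lhs_not_var : ∀ n, lhs ≠ Tm.var n
  fv_conds : ∀ p ∈ conds,
    (∀ n, Tm.FVar p.1 n → Tm.FVar lhs n) ∧ (∀ n, Tm.FVar p.2 n → Tm.FVar lhs n)
  fv_rhs : ∀ n, Tm.FVar rhs n → Tm.FVar lhs n

/-- Joinability: a common reduct. -/
def Joinable {α : Type} (R : α → α → Prop) (t u : α) : Prop :=
  ∃ v, Relation.ReflTransGen R t v ∧ Relation.ReflTransGen R u v

/-- One stratum of conditional rewriting: the smallest rewrite relation such that
`lσ → rσ` for every rule whose conditions are joinable w.r.t. `prev`. -/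
inductive CondStep {Sig : Type} (Rules : Set (CondRule Sig))
    (prev : Tm Sig → Tm Sig → Prop) : Tm Sig → Tm Sig → Prop
  | rule {ρ : CondRule Sig} (hρ : ρ ∈ Rules) (σ : ℕ → Tm Sig)
      (hconds : ∀ p ∈ ρ.conds, Joinable prev (Tm.subst σ p.1) (Tm.subst σ p.2)) :
      CondStep Rules prev (Tm.subst σ ρ.lhs) (Tm.subst σ ρ.rhs)
  | abs {t u : Tm Sig} : CondStep Rules prev t u →
      CondStep Rules prev (Tm.lam t) (Tm.lam u)
  | appL {t u v : Tm Sig} : CondStep Rules prev t u →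
      CondStep Rules prev (Tm.app t v) (Tm.app u v)
  | appR {t u v : Tm Sig} : CondStep Rules prev t u →
      CondStep Rules prev (Tm.app v t) (Tm.app v u)
  | substC (σ : ℕ → Tm Sig) {t u : Tm Sig} : CondStep Rules prev t u →
      CondStep Rules prev (Tm.subst σ t) (Tm.subst σ u)

/-- Stratified conditional rewriting `→_{R_i}`. -/
def CondRel {Sig : Type} (Rules : Set (CondRule Sig)) : ℕ → Tm Sig → Tm Sig → Prop
  | 0 => fun _ _ => False
  | i + 1 => CondStep Rules (CondRel Rules i)

/-- Conditional rewriting `→_R = ⋃ i, →_{R_i}`. -/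
def CondRew {Sig : Type} (Rules : Set (CondRule Sig)) (t u : Tm Sig) : Prop :=
  ∃ i, CondRel Rules i t u

/-- Stratified β-conditional rewriting `→_{R(β)_i}`: conditions are evaluated
w.r.t. `→_{β ∪ R(β)_{i-1}}`. -/
def BCondRel {Sig : Type} (Rules : Set (CondRule Sig)) : ℕ → Tm Sig → Tm Sig → Prop
  | 0 => fun _ _ => False
  | i + 1 => CondStep Rules (fun a b => Beta a b ∨ BCondRel Rules i a b)

/-- β-conditional rewriting `→_{R(β)} = ⋃ i, →_{R(β)_i}`. -/
def BCondRew {Sig : Type} (Rules : Set (CondRule Sig)) (t u : Tm Sig) : Prop :=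
  ∃ i, BCondRel Rules i t u

def IsConfluent {α : Type} (R : α → α → Prop) : Prop :=
  ∀ t u v, Relation.ReflTransGen R t u → Relation.ReflTransGen R t v →
    ∃ w, Relation.ReflTransGen R u w ∧ Relation.ReflTransGen R v w

def ConfluentOn {α : Type} (S : Set α) (R : α → α → Prop) : Prop :=
  ∀ t ∈ S, ∀ u v, Relation.ReflTransGen R t u → Relation.ReflTransGen R t v →
    ∃ w, Relation.ReflTransGen R u w ∧ Relation.ReflTransGen R v w

def Commutes {α : Type} (R₁ R₂ : α → α → Prop) : Prop :=
  ∀ s u t, Relation.ReflTransGen R₁ s u → Relation.ReflTransGen R₂ s t →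
    ∃ v, Relation.ReflTransGen R₂ u v ∧ Relation.ReflTransGen R₁ t v

def LeftLinear {Sig : Type} (Rules : Set (CondRule Sig)) : Prop :=
  ∀ ρ ∈ Rules, Tm.LinearTm ρ.lhs

/-- Semi-closed systems: in every rule the `ci` are closed applicative terms. -/
def SemiClosed {Sig : Type} (Rules : Set (CondRule Sig)) : Prop :=
  ∀ ρ ∈ Rules, ∀ p ∈ ρ.conds, Tm.Applicative p.2 ∧ Tm.ClosedTm p.2

def RightApplicative {Sig : Type} (Rules : Set (CondRule Sig)) : Prop :=
  ∀ ρ ∈ Rules, Tm.Applicative ρ.rhs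

def RightAlgebraic {Sig : Type} (Rules : Set (CondRule Sig)) : Prop :=
  ∀ ρ ∈ Rules, Tm.Algebraic ρ.rhs

/-- Algebraic systems: in every rule the `di`, `ci` and `r` are algebraic. -/
def AlgebraicSys {Sig : Type} (Rules : Set (CondRule Sig)) : Prop :=
  ∀ ρ ∈ Rules, (∀ p ∈ ρ.conds, Tm.Algebraic p.1 ∧ Tm.Algebraic p.2) ∧ Tm.Algebraic ρ.rhs

/-- A term respects the arity `a` if it contains no subterm `f t1 … tn` with `n > a f`. -/
def RespectsArity {Sig : Type} (a : Sig → ℕ) (t : Tm Sig) : Prop :=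
  ∀ (f : Sig) (ts : List (Tm Sig)),
    Tm.Subterm (Tm.appList (Tm.sym f) ts) t → ts.length ≤ a f

/-- A conditional rule respects `a` if the `di`, `ci` and both sides of `l ↦ r`
respect `a`, and `l = f l1 … lk` with `k = a f`. -/
def RuleRespectsArity {Sig : Type} (a : Sig → ℕ) (ρ : CondRule Sig) : Prop :=
  (∀ p ∈ ρ.conds, RespectsArity a p.1 ∧ RespectsArity a p.2) ∧
  RespectsArity a ρ.lhs ∧ RespectsArity a ρ.rhs ∧
  ∃ (f : Sig) (ls : List (Tm Sig)), ρ.lhs = Tm.appList (Tm.sym f) ls ∧ ls.length = a f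

def SysRespectsArity {Sig : Type} (a : Sig → ℕ) (Rules : Set (CondRule Sig)) : Prop :=
  ∀ ρ ∈ Rules, RuleRespectsArity a ρ

/-- `AN_a` : terms having a β-normal form, whose β-normal form respects `a`. -/
def ANset {Sig : Type} (a : Sig → ℕ) : Set (Tm Sig) :=
  {t | ∃ n, IsBnf t n ∧ RespectsArity a n}

/-- The rewrite relation of the unconditional system `R̄` containing `l ↦ di` and
`l ↦ r` for each rule `d⃗ = c⃗ ⊃ l ↦ r` of `R`. -/
inductive BarRel {Sig : Type} (Rules : Set (CondRule Sig)) : Tm Sig → Tm Sig → Prop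
  | ruleCond {ρ : CondRule Sig} (hρ : ρ ∈ Rules) {p : Tm Sig × Tm Sig} (hp : p ∈ ρ.conds)
      (σ : ℕ → Tm Sig) : BarRel Rules (Tm.subst σ ρ.lhs) (Tm.subst σ p.1)
  | ruleRhs {ρ : CondRule Sig} (hρ : ρ ∈ Rules) (σ : ℕ → Tm Sig) :
      BarRel Rules (Tm.subst σ ρ.lhs) (Tm.subst σ ρ.rhs)
  | abs {t u : Tm Sig} : BarRel Rules t u → BarRel Rules (Tm.lam t) (Tm.lam u)
  | appL {t u v : Tm Sig} : BarRel Rules t u → BarRel Rules (Tm.app t v) (Tm.app u v)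
  | appR {t u v : Tm Sig} : BarRel Rules t u → BarRel Rules (Tm.app v t) (Tm.app v u)
  | substC (σ : ℕ → Tm Sig) {t u : Tm Sig} : BarRel Rules t u →
      BarRel Rules (Tm.subst σ t) (Tm.subst σ u)

/-- Conditionally `(R, a)`-stable sets of terms. -/
def CondStable {Sig : Type} (Rules : Set (CondRule Sig)) (a : Sig → ℕ)
    (S : Set (Tm Sig)) : Prop :=
  (∀ t ∈ S, RespectsArity a t) ∧
  (∀ t ∈ S, ∀ u, (Beta t u ∨ BarRel Rules t u) → u ∈ S) ∧
  (∀ t ∈ S, ∀ u, Tm.Subterm u t → u ∈ S)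

/-- Head β-step along an application spine. -/
inductive HeadAux {Sig : Type} : Tm Sig → Tm Sig → Prop
  | beta (b a₀ : Tm Sig) : HeadAux (Tm.app (Tm.lam b) a₀) (Tm.subst1 a₀ b)
  | app {t u : Tm Sig} (v : Tm Sig) : HeadAux t u → HeadAux (Tm.app t v) (Tm.app u v)

/-- Head β-reduction `→h` : `λx⃗.(λy.b) a₀ a₁ … aₙ →h λx⃗.b[y:=a₀] a₁ … aₙ`. -/
inductive HeadRed {Sig : Type} : Tm Sig → Tm Sig → Prop
  | base {t u : Tm Sig} : HeadAux t u → HeadRed t u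
  | lam {t u : Tm Sig} : HeadRed t u → HeadRed (Tm.lam t) (Tm.lam u)

/-- The relation `≻` : (a) `λx⃗.v a1 … an ≻ ai` for `v` a variable or a symbol and
`n > 0`; (b) `λx⃗.(λy.b) a0 a1 … an ≻ λx⃗.b[y:=a0] a1 … an` (a head β-step). -/
def SuccRel {Sig : Type} (t u : Tm Sig) : Prop :=
  (∃ (m : ℕ) (h : Tm Sig) (args : List (Tm Sig)),
    ((∃ n, h = Tm.var n) ∨ (∃ f, h = Tm.sym f)) ∧ args ≠ [] ∧
    t = Tm.lamN m (Tm.appList h args) ∧ u ∈ args)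
  ∨ HeadRed t u

/-- The nested parallelization `▷_{R_i}` of `→_{R_i}`: the smallest parallel rewrite
relation with `lσ ▷ rτ` whenever `lσ →_{R_i} rσ` and `σ ▷ τ`. -/
inductive NPar {Sig : Type} (Rules : Set (CondRule Sig)) (i : ℕ) : Tm Sig → Tm Sig → Prop
  | var (n : ℕ) : NPar Rules i (Tm.var n) (Tm.var n)
  | sym (f : Sig) : NPar Rules i (Tm.sym f) (Tm.sym f)
  | app {t₁ u₁ t₂ u₂ : Tm Sig} : NPar Rules i t₁ u₁ → NPar Rules i t₂ u₂ →
      NPar Rules i (Tm.app t₁ t₂) (Tm.app u₁ u₂)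
  | abs {t u : Tm Sig} : NPar Rules i t u → NPar Rules i (Tm.lam t) (Tm.lam u)
  | substC (σ : ℕ → Tm Sig) {t u : Tm Sig} : NPar Rules i t u →
      NPar Rules i (Tm.subst σ t) (Tm.subst σ u)
  | rule {ρ : CondRule Sig} (hρ : ρ ∈ Rules) (σ τ : ℕ → Tm Sig)
      (hstep : CondRel Rules i (Tm.subst σ ρ.lhs) (Tm.subst σ ρ.rhs))
      (hστ : ∀ n, NPar Rules i (σ n) (τ n)) :
      NPar Rules i (Tm.subst σ ρ.lhs) (Tm.subst τ ρ.rhs)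

/-- The smallest parallel rewrite relation containing `R`. -/
inductive ParCl {Sig : Type} (R : Tm Sig → Tm Sig → Prop) : Tm Sig → Tm Sig → Prop
  | base {t u : Tm Sig} : R t u → ParCl R t u
  | var (n : ℕ) : ParCl R (Tm.var n) (Tm.var n)
  | sym (f : Sig) : ParCl R (Tm.sym f) (Tm.sym f)
  | app {t₁ u₁ t₂ u₂ : Tm Sig} : ParCl R t₁ u₁ → ParCl R t₂ u₂ →
      ParCl R (Tm.app t₁ t₂) (Tm.app u₁ u₂)
  | abs {t u : Tm Sig} : ParCl R t u → ParCl R (Tm.lam t) (Tm.lam u)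
  | substC (σ : ℕ → Tm Sig) {t u : Tm Sig} : ParCl R t u →
      ParCl R (Tm.subst σ t) (Tm.subst σ u)

/-- A rooted β-conditional rewrite step `lσ →_{R(β)_i} rσ` for the rule `ρ` and the
substitution `σ`: `ρ ∈ R` and the conditions of `ρ` instantiated by `σ` are joinable
w.r.t. `→_{β ∪ R(β)_{i-1}}`. -/
def RootedBStep {Sig : Type} (Rules : Set (CondRule Sig)) :
    ℕ → CondRule Sig → (ℕ → Tm Sig) → Prop
  | 0 => fun _ _ => False
  | i + 1 => fun ρ σ => ρ ∈ Rules ∧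
      ∀ p ∈ ρ.conds,
        Joinable (fun a b => Beta a b ∨ BCondRel Rules i a b)
          (Tm.subst σ p.1) (Tm.subst σ p.2)

/-- Subterm at a position (positions only descend through applications, which is
enough for algebraic left-hand sides). -/
def subtermAt {Sig : Type} : Tm Sig → List Bool → Option (Tm Sig)
  | t, [] => some t
  | Tm.app a _, false :: p => subtermAt a p
  | Tm.app _ b, true :: p => subtermAt b p
  | _, _ :: _ => none

/-- Replacement at a position. -/
def replaceAt {Sig : Type} : Tm Sig → List Bool → Tm Sig → Option (Tm Sig)
  | _, [], s => some s
  | Tm.app a b, false :: p, s => (replaceAt a p s).map (fun a' => Tm.app a' b)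
  | Tm.app a b, true :: p, s => (replaceAt b p s).map (fun b' => Tm.app a b')
  | _, _ :: _, _ => none

/-- Conditional critical pairs: an overlap of `ρ₂` at a non-variable position `p` of
the left-hand side of `ρ₁` via a most general unifier (here presented with a pair of
substitutions, which accounts for variable-disjoint renamings). -/
def CriticalPair {Sig : Type} (Rules : Set (CondRule Sig))
    (conds : List (Tm Sig × Tm Sig)) (s t : Tm Sig) : Prop :=
  ∃ ρ₁ ∈ Rules, ∃ ρ₂ ∈ Rules, ∃ (p : List Bool) (w : Tm Sig) (σ₁ σ₂ : ℕ → Tm Sig),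
    subtermAt ρ₁.lhs p = some w ∧
    (∀ n, w ≠ Tm.var n) ∧
    ¬ (ρ₁ = ρ₂ ∧ p = []) ∧
    Tm.subst σ₁ w = Tm.subst σ₂ ρ₂.lhs ∧
    (∀ τ₁ τ₂ : ℕ → Tm Sig, Tm.subst τ₁ w = Tm.subst τ₂ ρ₂.lhs →
      ∃ δ : ℕ → Tm Sig, (∀ n, Tm.FVar ρ₁.lhs n → τ₁ n = Tm.subst δ (σ₁ n)) ∧
        (∀ n, Tm.FVar ρ₂.lhs n → τ₂ n = Tm.subst δ (σ₂ n))) ∧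
    conds = ρ₁.conds.map (fun q => (Tm.subst σ₁ q.1, Tm.subst σ₁ q.2)) ++
            ρ₂.conds.map (fun q => (Tm.subst σ₂ q.1, Tm.subst σ₂ q.2)) ∧
    replaceAt (Tm.subst σ₁ ρ₁.lhs) p (Tm.subst σ₂ ρ₂.rhs) = some s ∧
    t = Tm.subst σ₁ ρ₁.rhs

/-- A symbol is defined if it heads the left-hand side of some rule. -/
def DefinedSym {Sig : Type} (Rules : Set (CondRule Sig)) (f : Sig) : Prop :=
  ∃ ρ ∈ Rules, ∃ ts : List (Tm Sig), ρ.lhs = Tm.appList (Tm.sym f) ts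

/-- OrthonormalSys systems. -/
def OrthonormalSys {Sig : Type} (Rules : Set (CondRule Sig)) : Prop :=
  LeftLinear Rules ∧
  (∀ ρ ∈ Rules, ∀ p ∈ ρ.conds, Tm.ClosedTm p.2 ∧ BetaNormal p.2 ∧
    ∀ f, DefinedSym Rules f → ¬ Tm.Subterm (Tm.sym f) p.2) ∧
  (∀ (conds : List (Tm Sig × Tm Sig)) (s t : Tm Sig), CriticalPair Rules conds s t →
    ∃ i j : Fin conds.length, i ≠ j ∧
      (conds.get i).1 = (conds.get j).1 ∧ (conds.get i).2 ≠ (conds.get j).2)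

/-- Dershowitz–Manna multiset extension of `<` on `ℕ`. -/
def MulLt (s t : Multiset ℕ) : Prop :=
  ∃ X Y Z : Multiset ℕ, Y ≠ 0 ∧ s = Z + X ∧ t = Z + Y ∧ ∀ x ∈ X, ∃ y ∈ Y, x < y

namespace BnfProj

open Relation

variable {Sig : Type}

/-! ### Substitution -/

/-- Action of a renaming `r` under one binder. -/
def upr (r : ℕ → ℕ) : ℕ → ℕ
  | 0 => 0
  | n + 1 => r n + 1

theorem lift_eq (d : ℕ) (t : Tm Sig) :
    Tm.lift d t = Tm.subst (fun n => if n < d then Tm.var n else Tm.var (n + 1)) t := by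
  induction t generalizing d with
  | var n => rfl
  | sym f => rfl
  | app t u iht ihu => simp only [Tm.lift, Tm.subst, iht, ihu]
  | lam t ih =>
    simp only [Tm.lift, Tm.subst, ih]
    congr 2
    funext n
    cases n with
    | zero => simp [Tm.up]
    | succ n =>
      by_cases h : n < d <;> simp [Tm.up, h, Tm.lift]

theorem lift_zero (t : Tm Sig) : Tm.lift 0 t = Tm.subst (fun n => Tm.var (n + 1)) t := by
  simp [lift_eq]

theorem up_var (r : ℕ → ℕ) :
    Tm.up (fun n => (Tm.var (r n) : Tm Sig)) = fun n => Tm.var (upr r n) := by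
  funext n
  cases n <;> simp [Tm.up, upr, Tm.lift]

theorem subst_ren (σ : ℕ → Tm Sig) (r : ℕ → ℕ) (t : Tm Sig) :
    Tm.subst σ (Tm.subst (fun n => Tm.var (r n)) t) = Tm.subst (fun n => σ (r n)) t := by
  induction t generalizing σ r with
  | var n => rfl
  | sym f => rfl
  | app t u iht ihu => simp only [Tm.subst, iht, ihu]
  | lam t ih =>
    simp only [Tm.subst, up_var, ih]
    congr 2
    funext n
    cases n <;> simp [Tm.up, upr]

theorem ren_subst (r : ℕ → ℕ) (σ : ℕ → Tm Sig) (t : Tm Sig) :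
    Tm.subst (fun n => Tm.var (r n)) (Tm.subst σ t) =
      Tm.subst (fun n => Tm.subst (fun n => Tm.var (r n)) (σ n)) t := by
  induction t generalizing σ r with
  | var n => rfl
  | sym f => rfl
  | app t u iht ihu => simp only [Tm.subst, iht, ihu]
  | lam t ih =>
    simp only [Tm.subst, up_var, ih]
    congr 2
    funext n
    cases n with
    | zero => rfl
    | succ n => simp only [Tm.up, lift_zero, subst_ren, upr]

theorem subst_subst (τ σ : ℕ → Tm Sig) (t : Tm Sig) :
    Tm.subst τ (Tm.subst σ t) = Tm.subst (fun n => Tm.subst τ (σ n)) t := by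
  induction t generalizing σ τ with
  | var n => rfl
  | sym f => rfl
  | app t u iht ihu => simp only [Tm.subst, iht, ihu]
  | lam t ih =>
    simp only [Tm.subst, ih]
    congr 2
    funext n
    cases n with
    | zero => rfl
    | succ n => simp only [Tm.up, lift_zero, subst_ren, ren_subst]

theorem subst_var (t : Tm Sig) : Tm.subst Tm.var t = t := by
  induction t with
  | var n => rfl
  | sym f => rfl
  | app t u iht ihu => simp only [Tm.subst, iht, ihu]
  | lam t ih =>
    have h : Tm.up (Tm.var : ℕ → Tm Sig) = Tm.var := by
      funext n
      cases n <;> simp [Tm.up, Tm.lift]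
    simp only [Tm.subst, h, ih]

theorem subst_subst1 (σ : ℕ → Tm Sig) (u t : Tm Sig) :
    Tm.subst σ (Tm.subst1 u t) = Tm.subst1 (Tm.subst σ u) (Tm.subst (Tm.up σ) t) := by
  simp only [Tm.subst1, subst_subst]
  congr 1
  funext n
  cases n with
  | zero => rfl
  | succ n =>
    simp only [Tm.scons, Tm.up, lift_zero, subst_ren, Tm.subst]
    exact (subst_var _).symm

/-! ### Weak head reduction and standard reduction -/

theorem headAux_subst (σ : ℕ → Tm Sig) {t u : Tm Sig} (h : HeadAux t u) :
    HeadAux (Tm.subst σ t) (Tm.subst σ u) := by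
  induction h with
  | beta b a₀ => rw [subst_subst1]; exact HeadAux.beta _ _
  | app v _ ih => exact HeadAux.app _ ih

theorem headAux_det {t u v : Tm Sig} (h : HeadAux t u) (h' : HeadAux t v) : u = v := by
  induction h generalizing v with
  | beta b a₀ =>
    cases h' with
    | beta => rfl
    | app _ h' => cases h'
  | app w h ih =>
    cases h' with
    | beta => cases h
    | app _ h' => rw [ih h']

theorem headStar_subst (σ : ℕ → Tm Sig) {t u : Tm Sig} (h : ReflTransGen HeadAux t u) :
    ReflTransGen HeadAux (Tm.subst σ t) (Tm.subst σ u) :=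
  h.lift (Tm.subst σ) fun _ _ => headAux_subst σ

theorem headStar_app (v : Tm Sig) {t u : Tm Sig} (h : ReflTransGen HeadAux t u) :
    ReflTransGen HeadAux (Tm.app t v) (Tm.app u v) :=
  h.lift (fun x => Tm.app x v) fun _ _ => HeadAux.app v

/-- β-reduction without the redundant closure under substitution. -/
inductive Beta0 : Tm Sig → Tm Sig → Prop
  | beta (t u : Tm Sig) : Beta0 (Tm.app (Tm.lam t) u) (Tm.subst1 u t)
  | abs {t u : Tm Sig} : Beta0 t u → Beta0 (Tm.lam t) (Tm.lam u)
  | appL {t u v : Tm Sig} : Beta0 t u → Beta0 (Tm.app t v) (Tm.app u v)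
  | appR {t u v : Tm Sig} : Beta0 t u → Beta0 (Tm.app v t) (Tm.app v u)

theorem Beta0.subst (σ : ℕ → Tm Sig) {t u : Tm Sig} (h : Beta0 t u) :
    Beta0 (Tm.subst σ t) (Tm.subst σ u) := by
  induction h generalizing σ with
  | beta t u => rw [subst_subst1]; exact Beta0.beta _ _
  | abs _ ih => exact (ih _).abs
  | appL _ ih => exact (ih _).appL
  | appR _ ih => exact (ih _).appR

theorem beta0_of_beta {t u : Tm Sig} (h : Beta t u) : Beta0 t u := by
  induction h with
  | beta t u => exact Beta0.beta _ _
  | abs _ ih => exact ih.abs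
  | appL _ ih => exact ih.appL
  | appR _ ih => exact ih.appR
  | substC σ _ ih => exact ih.subst σ

/-- Standard reduction in Kashima's style: weak head steps first, then standard
reductions inside the immediate subterms. -/
inductive St : Tm Sig → Tm Sig → Prop
  | var {t : Tm Sig} {n : ℕ} : ReflTransGen HeadAux t (Tm.var n) → St t (Tm.var n)
  | sym {t : Tm Sig} {f : Sig} : ReflTransGen HeadAux t (Tm.sym f) → St t (Tm.sym f)
  | app {t p q p' q' : Tm Sig} : ReflTransGen HeadAux t (Tm.app p q) → St p p' → St q q' →
      St t (Tm.app p' q')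
  | lam {t p p' : Tm Sig} : ReflTransGen HeadAux t (Tm.lam p) → St p p' → St t (Tm.lam p')

theorem St.rfl' (t : Tm Sig) : St t t := by
  induction t with
  | var n => exact St.var .refl
  | sym f => exact St.sym .refl
  | app t u iht ihu => exact St.app .refl iht ihu
  | lam t ih => exact St.lam .refl ih

theorem St.head {t t' u : Tm Sig} (h : ReflTransGen HeadAux t t') (h' : St t' u) : St t u := by
  cases h' with
  | var h1 => exact St.var (h.trans h1)
  | sym h1 => exact St.sym (h.trans h1)
  | app h1 h2 h3 => exact St.app (h.trans h1) h2 h3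
  | lam h1 h2 => exact St.lam (h.trans h1) h2

theorem St.ren (r : ℕ → ℕ) {t u : Tm Sig} (h : St t u) :
    St (Tm.subst (fun n => Tm.var (r n)) t) (Tm.subst (fun n => Tm.var (r n)) u) := by
  induction h generalizing r with
  | var h1 => exact St.var (headStar_subst _ h1)
  | sym h1 => exact St.sym (headStar_subst _ h1)
  | app h1 _ _ ih1 ih2 => exact St.app (headStar_subst _ h1) (ih1 r) (ih2 r)
  | lam h1 _ ih =>
    refine St.lam (headStar_subst _ h1) ?_
    rw [up_var]
    exact ih _

theorem St.subst {σ τ : ℕ → Tm Sig} (hστ : ∀ n, St (σ n) (τ n)) {t u : Tm Sig} (h : St t u) :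
    St (Tm.subst σ t) (Tm.subst τ u) := by
  induction h generalizing σ τ with
  | var h1 => exact St.head (headStar_subst _ h1) (hστ _)
  | sym h1 => exact St.sym (headStar_subst _ h1)
  | app h1 _ _ ih1 ih2 => exact St.app (headStar_subst _ h1) (ih1 hστ) (ih2 hστ)
  | lam h1 _ ih =>
    refine St.lam (headStar_subst _ h1) (ih fun n => ?_)
    cases n with
    | zero => exact St.rfl' _
    | succ n =>
      simp only [Tm.up, lift_zero]
      exact (hστ n).ren _

theorem St.beta0 {t u v : Tm Sig} (h : St t u) (hb : Beta0 u v) : St t v := by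
  induction hb generalizing t with
  | beta b c =>
    cases h with
    | app h1 h2 h3 =>
      cases h2 with
      | lam h4 h5 =>
        refine St.head ((h1.trans (headStar_app _ h4)).tail (HeadAux.beta _ _)) ?_
        refine h5.subst fun n => ?_
        cases n with
        | zero => exact h3
        | succ n => exact St.rfl' _
  | abs _ ih =>
    cases h with
    | lam h1 h2 => exact St.lam h1 (ih h2)
  | appL _ ih =>
    cases h with
    | app h1 h2 h3 => exact St.app h1 (ih h2) h3
  | appR _ ih =>
    cases h with
    | app h1 h2 h3 => exact St.app h1 h2 (ih h3)

/-- The standardization theorem. -/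
theorem St.of_betaStar {t u : Tm Sig} (h : ReflTransGen Beta t u) : St t u := by
  induction h with
  | refl => exact St.rfl' _
  | tail _ hb ih => exact ih.beta0 (beta0_of_beta hb)

/-! ### Big-step normalization -/

/-- `BS k b t n`: leftmost-outermost reduction brings `t` to the β-normal form `n`, with
a derivation of size `k`. The flag `b = true` restricts to terms `t` of the shape
`h t₁ … tₘ` with `h` a variable or a symbol, only the arguments being normalized. -/
inductive BS : ℕ → Bool → Tm Sig → Tm Sig → Prop
  | var (n : ℕ) : BS 0 true (Tm.var n) (Tm.var n)
  | sym (f : Sig) : BS 0 true (Tm.sym f) (Tm.sym f)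
  | app {k m : ℕ} {t n u p : Tm Sig} : BS k true t n → BS m false u p →
      BS (k + m + 1) true (Tm.app t u) (Tm.app n p)
  | ne {k : ℕ} {t n : Tm Sig} : BS k true t n → BS (k + 1) false t n
  | lam {k : ℕ} {t n : Tm Sig} : BS k false t n → BS (k + 1) false (Tm.lam t) (Tm.lam n)
  | head {k : ℕ} {t t' n : Tm Sig} : HeadAux t t' → BS k false t' n → BS (k + 1) false t n

theorem BS.not_headAux {k : ℕ} {t n u : Tm Sig} (h : BS k true t n) : ¬ HeadAux t u := by
  generalize hb : true = b at h
  induction h generalizing u with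
  | var n => rintro ⟨⟩
  | sym f => rintro ⟨⟩
  | app h1 _ ih1 _ =>
    intro h
    cases h with
    | beta => cases h1
    | app _ h => exact ih1 rfl h
  | ne => cases hb
  | lam => cases hb
  | head => cases hb

theorem BS.det {k k' : ℕ} {b b' : Bool} {t n n' : Tm Sig} (h : BS k b t n)
    (h' : BS k' b' t n') : n = n' := by
  induction h generalizing k' b' n' with
  | var n =>
    cases h' with
    | var => rfl
    | ne h' => cases h'; rfl
    | head h' => cases h'
  | sym f =>
    cases h' with
    | sym => rfl
    | ne h' => cases h'; rfl
    | head h' => cases h'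
  | app h1 h2 ih1 ih2 =>
    cases h' with
    | app h3 h4 => rw [ih1 h3, ih2 h4]
    | ne h' =>
      cases h' with
      | app h3 h4 => rw [ih1 h3, ih2 h4]
    | head h' _ => exact absurd h' (BS.app h1 h2).not_headAux
  | ne _ ih => exact ih h'
  | lam _ ih =>
    cases h' with
    | ne h' => cases h'
    | lam h' => rw [ih h']
    | head h' => cases h'
  | head h1 h2 ih =>
    cases h' with
    | var => cases h1
    | sym => cases h1
    | app h3 h4 => exact absurd h1 (BS.app h3 h4).not_headAux
    | ne h3 => exact absurd h1 h3.not_headAux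
    | lam => cases h1
    | head h3 h4 => rw [headAux_det h3 h1] at h4; exact ih h4

theorem BS.headStar {t t' n : Tm Sig} (h : ReflTransGen HeadAux t t') :
    (∃ k, BS k false t' n) → ∃ k, BS k false t n := by
  induction h using ReflTransGen.head_induction_on with
  | refl => exact id
  | head h1 _ ih =>
    intro h
    obtain ⟨k, hk⟩ := ih h
    exact ⟨_, BS.head h1 hk⟩

/-- Terms containing no β-redex. -/
def NoRedex : Tm Sig → Prop
  | Tm.var _ => True
  | Tm.sym _ => True
  | Tm.lam t => NoRedex t
  | Tm.app t u => NoRedex t ∧ NoRedex u ∧ ∀ s, t ≠ Tm.lam s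

theorem noRedex_of_subst {σ : ℕ → Tm Sig} {t : Tm Sig} (h : NoRedex (Tm.subst σ t)) :
    NoRedex t := by
  induction t generalizing σ with
  | var n => trivial
  | sym f => trivial
  | lam t ih => exact ih (σ := Tm.up σ) h
  | app t u iht ihu =>
    obtain ⟨h1, h2, h3⟩ := h
    refine ⟨iht h1, ihu h2, ?_⟩
    rintro s rfl
    exact h3 _ rfl

theorem not_noRedex_of_beta {t u : Tm Sig} (h : Beta t u) : ¬ NoRedex t := by
  induction h with
  | beta t u => exact fun h => h.2.2 _ rfl
  | abs _ ih => exact ih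
  | appL _ ih => exact fun h => ih h.1
  | appR _ ih => exact fun h => ih h.2.1
  | substC σ _ ih => exact fun h => ih (noRedex_of_subst h)

theorem noRedex_of_betaNormal {t : Tm Sig} (h : BetaNormal t) : NoRedex t := by
  induction t with
  | var n => trivial
  | sym f => trivial
  | lam t ih => exact ih fun u hu => h _ hu.abs
  | app t u iht ihu =>
    refine ⟨iht fun v hv => h _ hv.appL, ihu fun v hv => h _ hv.appR, ?_⟩
    rintro s rfl
    exact h _ (Beta.beta _ _)

theorem BS.noRedex {k : ℕ} {b : Bool} {t n : Tm Sig} (h : BS k b t n) :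
    NoRedex n ∧ (b = true → ∀ s, n ≠ Tm.lam s) := by
  induction h with
  | var n => exact ⟨trivial, fun _ s => by simp⟩
  | sym f => exact ⟨trivial, fun _ s => by simp⟩
  | app _ _ ih1 ih2 => exact ⟨⟨ih1.1, ih2.1, ih1.2 rfl⟩, fun _ s => by simp⟩
  | ne _ ih => exact ⟨ih.1, by simp⟩
  | lam _ ih => exact ⟨ih.1, by simp⟩
  | head _ _ ih => exact ⟨ih.1, by simp⟩

theorem beta_of_headAux {t u : Tm Sig} (h : HeadAux t u) : Beta t u := by
  induction h with
  | beta b a₀ => exact Beta.beta _ _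
  | app v _ ih => exact ih.appL

theorem BS.betaStar {k : ℕ} {b : Bool} {t n : Tm Sig} (h : BS k b t n) :
    ReflTransGen Beta t n := by
  induction h with
  | var n => exact .refl
  | sym f => exact .refl
  | app _ _ ih1 ih2 =>
    exact (ih1.lift (fun x => Tm.app x _) fun _ _ => Beta.appL).trans
      (ih2.lift (fun x => Tm.app _ x) fun _ _ => Beta.appR)
  | ne _ ih => exact ih
  | lam _ ih => exact ih.lift Tm.lam fun _ _ => Beta.abs
  | head h _ ih => exact ih.head (beta_of_headAux h)

theorem BS.isBnf {k : ℕ} {b : Bool} {t n : Tm Sig} (h : BS k b t n) : IsBnf t n :=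
  ⟨h.betaStar, fun _ hu => not_noRedex_of_beta hu h.noRedex.1⟩

theorem BS.of_st {t n : Tm Sig} (h : St t n) (hn : NoRedex n) :
    (∃ k, BS k false t n) ∧
      ((∀ s, n ≠ Tm.lam s) → ∃ t' k, ReflTransGen HeadAux t t' ∧ BS k true t' n) := by
  induction h with
  | var h1 => exact ⟨BS.headStar h1 ⟨_, (BS.var _).ne⟩, fun _ => ⟨_, _, h1, BS.var _⟩⟩
  | sym h1 => exact ⟨BS.headStar h1 ⟨_, (BS.sym _).ne⟩, fun _ => ⟨_, _, h1, BS.sym _⟩⟩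
  | lam h1 _ ih =>
    obtain ⟨k, hk⟩ := (ih hn).1
    exact ⟨BS.headStar h1 ⟨_, hk.lam⟩, fun h => absurd rfl (h _)⟩
  | app h1 _ _ ih1 ih2 =>
    obtain ⟨p, k, hp, hk⟩ := (ih1 hn.1).2 hn.2.2
    obtain ⟨m, hm⟩ := (ih2 hn.2.1).1
    have h2 := h1.trans (headStar_app _ hp)
    exact ⟨BS.headStar h2 ⟨_, (hk.app hm).ne⟩, fun _ => ⟨_, _, h2, hk.app hm⟩⟩

/-- The normalization theorem: leftmost-outermost reduction reaches every β-normal form. -/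
theorem BS.of_isBnf {t n : Tm Sig} (h : IsBnf t n) : ∃ k, BS k false t n :=
  (BS.of_st (St.of_betaStar h.1) (noRedex_of_betaNormal h.2)).1

/-! ### Algebraic terms and arities -/

/-- Algebraic terms, presented by peeling off the last argument. With flag `true`, the
term is moreover not a variable, hence headed by a symbol. -/
inductive Alg : Bool → Tm Sig → Prop
  | sym (f : Sig) : Alg true (Tm.sym f)
  | app {t u : Tm Sig} : Alg true t → Alg false u → Alg true (Tm.app t u)
  | var (n : ℕ) : Alg false (Tm.var n)
  | ne {t : Tm Sig} : Alg true t → Alg false t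

theorem alg_appList {h : Tm Sig} (ts : List (Tm Sig)) (hh : Alg true h)
    (hts : ∀ t ∈ ts, Alg false t) : Alg true (Tm.appList h ts) := by
  induction ts generalizing h with
  | nil => exact hh
  | cons u us ih =>
    exact ih (hh.app (hts u (by simp))) fun t ht => hts t (by simp [ht])

theorem alg_cases {t : Tm Sig} (h : Tm.Algebraic t) : Alg true t ∨ ∃ n, t = Tm.var n := by
  induction h with
  | var n => exact Or.inr ⟨n, rfl⟩
  | symApp f ts _ ih =>
    refine Or.inl (alg_appList ts (Alg.sym f) fun t ht => ?_)
    rcases ih t ht with h | ⟨n, rfl⟩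
    · exact h.ne
    · exact Alg.var n

theorem alg_of_algebraic {t : Tm Sig} (h : Tm.Algebraic t) : Alg false t := by
  rcases alg_cases h with h | ⟨n, rfl⟩
  · exact h.ne
  · exact Alg.var n

theorem alg_lhs (ρ : CondRule Sig) : Alg true ρ.lhs := by
  rcases alg_cases ρ.lhs_alg with h | ⟨n, h⟩
  · exact h
  · exact absurd h (ρ.lhs_not_var n)

/-- The head symbol of an application spine with its number of arguments, if the head
is a symbol. -/
def hd : Tm Sig → Option (Sig × ℕ)
  | Tm.sym f => some (f, 0)
  | Tm.app t _ => (hd t).map fun p => (p.1, p.2 + 1)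
  | Tm.var _ => none
  | Tm.lam _ => none

theorem hd_appList {h : Tm Sig} (ts : List (Tm Sig)) :
    hd (Tm.appList h ts) = (hd h).map fun p => (p.1, p.2 + ts.length) := by
  induction ts generalizing h with
  | nil => simp [Tm.appList]
  | cons u us ih =>
    simp only [Tm.appList, ih, hd, Option.map_map, List.length_cons]
    congr 1
    funext p
    simp only [Function.comp, Prod.mk.injEq, true_and]
    omega

theorem appList_append (h : Tm Sig) (ts : List (Tm Sig)) (u : Tm Sig) :
    Tm.appList h (ts ++ [u]) = Tm.app (Tm.appList h ts) u := by
  induction ts generalizing h with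
  | nil => rfl
  | cons v vs ih => exact ih _

theorem exists_of_hd {t : Tm Sig} {f : Sig} {n : ℕ} (h : hd t = some (f, n)) :
    ∃ ts, t = Tm.appList (Tm.sym f) ts ∧ ts.length = n := by
  induction t generalizing n with
  | var n => simp [hd] at h
  | lam t => simp [hd] at h
  | sym g =>
    simp only [hd, Option.some.injEq, Prod.mk.injEq] at h
    obtain ⟨rfl, rfl⟩ := h
    exact ⟨[], rfl, rfl⟩
  | app t u iht _ =>
    simp only [hd, Option.map_eq_some_iff, Prod.mk.injEq] at h
    obtain ⟨⟨g, m⟩, h1, rfl, rfl⟩ := h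
    obtain ⟨ts, rfl, rfl⟩ := iht h1
    exact ⟨ts ++ [u], (appList_append _ _ _).symm, by simp⟩

theorem hd_subst {σ : ℕ → Tm Sig} {t : Tm Sig} {p : Sig × ℕ} (h : hd t = some p) :
    hd (Tm.subst σ t) = some p := by
  induction t generalizing p with
  | var n => simp [hd] at h
  | lam t => simp [hd] at h
  | sym g => exact h
  | app t u iht _ =>
    simp only [hd, Option.map_eq_some_iff] at h
    obtain ⟨q, h1, rfl⟩ := h
    simp [Tm.subst, hd, iht h1]

theorem Alg.hd_ne_none {t : Tm Sig} (h : Alg true t) : ∃ p, hd t = some p := by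
  generalize hb : true = b at h
  induction h with
  | sym f => exact ⟨_, rfl⟩
  | app _ _ ih _ =>
    obtain ⟨p, hp⟩ := ih rfl
    exact ⟨_, by simp only [hd, hp, Option.map_some]; rfl⟩
  | var => cases hb
  | ne => cases hb

theorem hd_lhs_subst (ρ : CondRule Sig) (σ : ℕ → Tm Sig) : hd (Tm.subst σ ρ.lhs) ≠ none := by
  obtain ⟨p, hp⟩ := (alg_lhs ρ).hd_ne_none
  simp [hd_subst hp]

theorem hd_of_headAux {t u : Tm Sig} (h : HeadAux t u) : hd t = none := by
  induction h with
  | beta b a₀ => rfl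
  | app v _ ih => simp [hd, ih]

theorem BS.ne_inv {k : ℕ} {t n : Tm Sig} (h : BS k false t n) {p : Sig × ℕ}
    (hp : hd t = some p) : ∃ k', k = k' + 1 ∧ BS k' true t n := by
  cases h with
  | ne h => exact ⟨_, rfl, h⟩
  | lam => simp [hd] at hp
  | head h => simp [hd_of_headAux h] at hp

/-- `RespectsArity` by recursion on the term. -/
def Resp (a : Sig → ℕ) : Tm Sig → Prop
  | Tm.var _ => True
  | Tm.sym _ => True
  | Tm.lam t => Resp a t
  | Tm.app t u => Resp a t ∧ Resp a u ∧ ∀ f n, hd (Tm.app t u) = some (f, n) → n ≤ a f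

theorem resp_hd {a : Sig → ℕ} {t : Tm Sig} (h : Resp a t) {f : Sig} {n : ℕ}
    (hf : hd t = some (f, n)) : n ≤ a f := by
  cases t with
  | var n => simp [hd] at hf
  | lam t => simp [hd] at hf
  | sym g =>
    simp only [hd, Option.some.injEq, Prod.mk.injEq] at hf
    omega
  | app t u => exact h.2.2 _ _ hf

theorem respectsArity_iff (a : Sig → ℕ) (t : Tm Sig) : RespectsArity a t ↔ Resp a t := by
  constructor
  · intro h
    induction t with
    | var n => trivial
    | sym f => trivial
    | lam t ih => exact ih fun f ts hs => h f ts hs.lam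
    | app t u iht ihu =>
      refine ⟨iht fun f ts hs => h f ts hs.appL, ihu fun f ts hs => h f ts hs.appR, ?_⟩
      intro f n hf
      obtain ⟨ts, h1, rfl⟩ := exists_of_hd hf
      refine h f ts ?_
      rw [h1]
      exact Tm.Subterm.refl _
  · intro h f ts hs
    have key : ∀ s, Tm.Subterm s t → Resp a s := by
      clear hs
      intro s hs
      induction hs with
      | refl => exact h
      | appL _ ih => exact ih h.1
      | appR _ ih => exact ih h.2.1
      | lam _ ih => exact ih h
    refine resp_hd (key _ hs) ?_
    simp [hd_appList, hd]

theorem Alg.resp_subst {a : Sig → ℕ} {b : Bool} {t : Tm Sig} (ht : Alg b t) {σ : ℕ → Tm Sig}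
    (h : Resp a t) (hσ : ∀ x, Tm.FVar t x → Resp a (σ x)) : Resp a (Tm.subst σ t) := by
  induction ht with
  | sym f => trivial
  | var n => exact hσ n rfl
  | ne _ ih => exact ih h hσ
  | app h1 h2 ih1 ih2 =>
    refine ⟨ih1 h.1 fun x hx => hσ x (Or.inl hx), ih2 h.2.1 fun x hx => hσ x (Or.inr hx), ?_⟩
    intro f n hf
    obtain ⟨p, hp⟩ := (h1.app h2).hd_ne_none
    have h3 := hd_subst (σ := σ) hp
    rw [Tm.subst, hf] at h3
    exact h.2.2 _ _ (hp.trans h3.symm)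

theorem Alg.resp_of_subst {a : Sig → ℕ} {b : Bool} {t : Tm Sig} (ht : Alg b t)
    {σ : ℕ → Tm Sig} (h : Resp a (Tm.subst σ t)) {x : ℕ} (hx : Tm.FVar t x) :
    Resp a (σ x) := by
  induction ht with
  | sym f => cases hx
  | var n => cases hx; exact h
  | ne _ ih => exact ih h hx
  | app h1 h2 ih1 ih2 =>
    rcases hx with hx | hx
    · exact ih1 h.1 hx
    · exact ih2 h.2.1 hx

theorem Alg.bs_subst {b : Bool} {t : Tm Sig} (ht : Alg b t) {σ ν : ℕ → Tm Sig}
    (hσ : ∀ x, Tm.FVar t x → ∃ k, BS k false (σ x) (ν x)) :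
    ∃ k, BS k b (Tm.subst σ t) (Tm.subst ν t) := by
  induction ht with
  | sym f => exact ⟨_, BS.sym f⟩
  | var n => exact hσ n rfl
  | ne _ ih =>
    obtain ⟨k, hk⟩ := ih hσ
    exact ⟨_, hk.ne⟩
  | app _ _ ih1 ih2 =>
    obtain ⟨k, hk⟩ := ih1 fun x hx => hσ x (Or.inl hx)
    obtain ⟨m, hm⟩ := ih2 fun x hx => hσ x (Or.inr hx)
    exact ⟨_, hk.app hm⟩

open Classical in
/-- The β-normal form of `t` if there is one, and `t` itself otherwise. -/
noncomputable def nfOf (t : Tm Sig) : Tm Sig :=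
  if h : ∃ n k, BS k false t n then h.choose else t

theorem BS.eq_nfOf {k : ℕ} {t n : Tm Sig} (h : BS k false t n) : n = nfOf t := by
  have h' : ∃ n k, BS k false t n := ⟨n, k, h⟩
  rw [nfOf, dif_pos h']
  exact h.det h'.choose_spec.choose_spec

/-- Normalizing an instance `lσ` of an algebraic term amounts to normalizing the `σ x`
for the variables `x` of `l`; their derivations are strictly smaller when `l` is not a
variable. -/
theorem Alg.bs_inv {b : Bool} {l : Tm Sig} (hl : Alg b l) {σ : ℕ → Tm Sig} {k : ℕ}
    {n : Tm Sig} (h : BS k b (Tm.subst σ l) n) :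
    n = Tm.subst (fun x => nfOf (σ x)) l ∧
      ∀ x, Tm.FVar l x → ∃ k', k' ≤ k ∧ (b = true → k' < k) ∧
        BS k' false (σ x) (nfOf (σ x)) := by
  induction hl generalizing k n with
  | sym f =>
    cases h
    exact ⟨rfl, fun x hx => hx.elim⟩
  | var m =>
    refine ⟨h.eq_nfOf, ?_⟩
    rintro x rfl
    have h1 := h
    rw [h.eq_nfOf] at h1
    exact ⟨k, le_rfl, by simp, h1⟩
  | ne hl ih =>
    obtain ⟨p, hp⟩ := hl.hd_ne_none
    obtain ⟨k₁, rfl, h0⟩ := h.ne_inv (hd_subst (σ := σ) hp)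
    obtain ⟨h1, h2⟩ := ih h0
    refine ⟨h1, fun x hx => ?_⟩
    obtain ⟨k', h3, h4, h5⟩ := h2 x hx
    exact ⟨k', by omega, by simp, h5⟩
  | app _ _ ih1 ih2 =>
    cases h with
    | app h1 h2 =>
      obtain ⟨rfl, h3⟩ := ih1 h1
      obtain ⟨rfl, h4⟩ := ih2 h2
      refine ⟨rfl, fun x hx => ?_⟩
      rcases hx with hx | hx
      · obtain ⟨k', h5, -, h6⟩ := h3 x hx
        exact ⟨k', by omega, fun _ => by omega, h6⟩
      · obtain ⟨k', h5, -, h6⟩ := h4 x hx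
        exact ⟨k', by omega, fun _ => by omega, h6⟩

/-! ### Parallel β-conditional reduction -/

/-- Parallel reduction for `→_{β ∪ R(β)_i}`: all redexes (β or conditional) of a chosen
set are contracted at once, and the substituted parts of a conditional redex `lσ` may be
reduced in the same step. -/
inductive PB (Rules : Set (CondRule Sig)) (i : ℕ) : Tm Sig → Tm Sig → Prop
  | var (n : ℕ) : PB Rules i (Tm.var n) (Tm.var n)
  | sym (f : Sig) : PB Rules i (Tm.sym f) (Tm.sym f)
  | app {t t' u u' : Tm Sig} : PB Rules i t t' → PB Rules i u u' →
      PB Rules i (Tm.app t u) (Tm.app t' u')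
  | lam {t t' : Tm Sig} : PB Rules i t t' → PB Rules i (Tm.lam t) (Tm.lam t')
  | beta {t t' u u' : Tm Sig} : PB Rules i t t' → PB Rules i u u' →
      PB Rules i (Tm.app (Tm.lam t) u) (Tm.subst1 u' t')
  | rule {ρ : CondRule Sig} {σ τ : ℕ → Tm Sig} : RootedBStep Rules i ρ σ →
      (∀ n, PB Rules i (σ n) (τ n)) → PB Rules i (Tm.subst σ ρ.lhs) (Tm.subst τ ρ.rhs)

variable {Rules : Set (CondRule Sig)} {i : ℕ}

theorem bcondRel_subst (θ : ℕ → Tm Sig) {t u : Tm Sig} (h : BCondRel Rules i t u) :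
    BCondRel Rules i (Tm.subst θ t) (Tm.subst θ u) := by
  cases i with
  | zero => exact h.elim
  | succ i => exact CondStep.substC θ h

theorem rootedBStep_subst (θ : ℕ → Tm Sig) {ρ : CondRule Sig} {σ : ℕ → Tm Sig}
    (h : RootedBStep Rules i ρ σ) :
    RootedBStep Rules i ρ (fun n => Tm.subst θ (σ n)) := by
  cases i with
  | zero => exact h.elim
  | succ i =>
    refine ⟨h.1, fun p hp => ?_⟩
    obtain ⟨v, h1, h2⟩ := h.2 p hp
    have key : ∀ x y : Tm Sig, (Beta x y ∨ BCondRel Rules i x y) →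
        (Beta (Tm.subst θ x) (Tm.subst θ y) ∨
          BCondRel Rules i (Tm.subst θ x) (Tm.subst θ y)) :=
      fun x y hxy => hxy.imp (Beta.substC θ) (bcondRel_subst θ)
    refine ⟨Tm.subst θ v, ?_, ?_⟩
    · rw [← subst_subst]
      exact h1.lift _ key
    · rw [← subst_subst]
      exact h2.lift _ key

theorem PB.rfl' (t : Tm Sig) : PB Rules i t t := by
  induction t with
  | var n => exact PB.var n
  | sym f => exact PB.sym f
  | app t u iht ihu => exact iht.app ihu
  | lam t ih => exact ih.lam

theorem PB.ren (r : ℕ → ℕ) {t u : Tm Sig} (h : PB Rules i t u) :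
    PB Rules i (Tm.subst (fun n => Tm.var (r n)) t) (Tm.subst (fun n => Tm.var (r n)) u) := by
  induction h generalizing r with
  | var n => exact PB.var _
  | sym f => exact PB.sym f
  | app _ _ ih1 ih2 => exact (ih1 r).app (ih2 r)
  | lam _ ih =>
    have := ih (upr r)
    rw [← up_var] at this
    exact this.lam
  | beta _ _ ih1 ih2 =>
    have := ih1 (upr r)
    rw [← up_var] at this
    rw [subst_subst1]
    exact PB.beta this (ih2 r)
  | rule h1 _ ih =>
    rw [subst_subst, subst_subst]
    exact PB.rule (rootedBStep_subst _ h1) fun n => ih n r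

theorem PB.up {σ τ : ℕ → Tm Sig} (h : ∀ n, PB Rules i (σ n) (τ n)) (n : ℕ) :
    PB Rules i (Tm.up σ n) (Tm.up τ n) := by
  cases n with
  | zero => exact PB.var 0
  | succ n =>
    simp only [Tm.up, lift_zero]
    exact (h n).ren _

theorem PB.subst {σ τ : ℕ → Tm Sig} (hστ : ∀ n, PB Rules i (σ n) (τ n)) {t u : Tm Sig}
    (h : PB Rules i t u) : PB Rules i (Tm.subst σ t) (Tm.subst τ u) := by
  induction h generalizing σ τ with
  | var n => exact hστ n
  | sym f => exact PB.sym f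
  | app _ _ ih1 ih2 => exact (ih1 hστ).app (ih2 hστ)
  | lam _ ih => exact (ih (PB.up hστ)).lam
  | beta _ _ ih1 ih2 =>
    rw [subst_subst1]
    exact PB.beta (ih1 (PB.up hστ)) (ih2 hστ)
  | rule h1 _ ih =>
    rw [subst_subst, subst_subst]
    exact PB.rule (rootedBStep_subst _ h1) fun n => ih n hστ

theorem PB.subst1 {t t' u u' : Tm Sig} (ht : PB Rules i t t') (hu : PB Rules i u u') :
    PB Rules i (Tm.subst1 u t) (Tm.subst1 u' t') := by
  refine ht.subst fun n => ?_
  cases n with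
  | zero => exact hu
  | succ n => exact PB.var n

theorem PB.of_beta {t u : Tm Sig} (h : Beta t u) : PB Rules i t u := by
  induction h with
  | beta t u => exact PB.beta (PB.rfl' t) (PB.rfl' u)
  | abs _ ih => exact ih.lam
  | appL _ ih => exact ih.app (PB.rfl' _)
  | appR _ ih => exact (PB.rfl' _).app ih
  | substC σ _ ih => exact ih.subst fun n => PB.rfl' _

theorem PB.of_bcondRel {t u : Tm Sig} (h : BCondRel Rules i t u) : PB Rules i t u := by
  cases i with
  | zero => exact h.elim
  | succ i =>
    replace h : CondStep Rules _ t u := h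
    induction h with
    | rule hρ σ hc => exact PB.rule ⟨hρ, hc⟩ fun n => PB.rfl' _
    | abs _ ih => exact ih.lam
    | appL _ ih => exact ih.app (PB.rfl' _)
    | appR _ ih => exact (PB.rfl' _).app ih
    | substC σ _ ih => exact ih.subst fun n => PB.rfl' _

theorem PB.lam_inv {t u : Tm Sig} (h : PB Rules i (Tm.lam t) u) :
    ∃ t', u = Tm.lam t' ∧ PB Rules i t t' := by
  generalize hs : Tm.lam t = s at h
  cases h with
  | var | sym | app | beta => cases hs
  | lam h => cases hs; exact ⟨_, rfl, h⟩
  | rule => exact absurd (by rw [← hs]; rfl) (hd_lhs_subst _ _)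

theorem PB.app_inv {t s u : Tm Sig} (h : PB Rules i (Tm.app t s) u) :
    (∃ t' s', u = Tm.app t' s' ∧ PB Rules i t t' ∧ PB Rules i s s') ∨
    (∃ b b' s', t = Tm.lam b ∧ u = Tm.subst1 s' b' ∧ PB Rules i b b' ∧ PB Rules i s s') ∨
    (∃ ρ σ τ, Tm.app t s = Tm.subst σ ρ.lhs ∧ u = Tm.subst τ ρ.rhs ∧
      RootedBStep Rules i ρ σ ∧ ∀ n, PB Rules i (σ n) (τ n)) := by
  generalize hs : Tm.app t s = r at h
  cases h with
  | var | sym | lam => cases hs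
  | app h1 h2 => cases hs; exact Or.inl ⟨_, _, rfl, h1, h2⟩
  | beta h1 h2 => cases hs; exact Or.inr (Or.inl ⟨_, _, _, rfl, rfl, h1, h2⟩)
  | rule h1 h2 => exact Or.inr (Or.inr ⟨_, _, _, rfl, rfl, h1, h2⟩)

/-- Parallel reduction commutes with a weak head step: a conditional redex never sits on
the spine of a β-redex, since it is headed by a symbol. -/
theorem PB.headAux {t t' u : Tm Sig} (ht : HeadAux t t') (h : PB Rules i t u) :
    ∃ u', PB Rules i t' u' ∧ (u = u' ∨ HeadAux u u') := by
  induction ht generalizing u with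
  | beta b a₀ =>
    rcases h.app_inv with ⟨p, q, rfl, h1, h2⟩ | ⟨b1, b', s', h0, rfl, h1, h2⟩ |
      ⟨ρ, σ, τ, h1, -⟩
    · obtain ⟨b', rfl, h3⟩ := h1.lam_inv
      exact ⟨_, h3.subst1 h2, Or.inr (HeadAux.beta _ _)⟩
    · cases h0
      exact ⟨_, h1.subst1 h2, Or.inl rfl⟩
    · exact absurd (by rw [← h1]; rfl) (hd_lhs_subst ρ σ)
  | app v hp ih =>
    rcases h.app_inv with ⟨p, q, rfl, h1, h2⟩ | ⟨b1, b', s', rfl, -⟩ | ⟨ρ, σ, τ, h1, -⟩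
    · obtain ⟨u', h3, rfl | h4⟩ := ih h1
      · exact ⟨_, h3.app h2, Or.inl rfl⟩
      · exact ⟨_, h3.app h2, Or.inr (HeadAux.app _ h4)⟩
    · cases hp
    · exact absurd (by rw [← h1]; simp [hd, hd_of_headAux hp]) (hd_lhs_subst ρ σ)

/-! ### Projection on β-normal forms -/

theorem condStar_lam {t u : Tm Sig} (h : ReflTransGen (CondRel Rules i) t u) :
    ReflTransGen (CondRel Rules i) (Tm.lam t) (Tm.lam u) := by
  refine h.lift _ fun x y hxy => ?_
  cases i with
  | zero => exact hxy.elim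
  | succ i => exact CondStep.abs hxy

theorem condStar_app {t u t' u' : Tm Sig} (h : ReflTransGen (CondRel Rules i) t t')
    (h' : ReflTransGen (CondRel Rules i) u u') :
    ReflTransGen (CondRel Rules i) (Tm.app t u) (Tm.app t' u') := by
  refine (h.lift (fun x => Tm.app x u) fun x y hxy => ?_).trans
    (h'.lift (fun x => Tm.app t' x) fun x y hxy => ?_)
  · cases i with
    | zero => exact hxy.elim
    | succ i => exact CondStep.appL hxy
  · cases i with
    | zero => exact hxy.elim
    | succ i => exact CondStep.appR hxy

theorem Alg.condStar_subst {b : Bool} {t : Tm Sig} (ht : Alg b t) {ν μ : ℕ → Tm Sig}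
    (h : ∀ x, Tm.FVar t x → ReflTransGen (CondRel Rules i) (ν x) (μ x)) :
    ReflTransGen (CondRel Rules i) (Tm.subst ν t) (Tm.subst μ t) := by
  induction ht with
  | sym f => exact .refl
  | var n => exact h n rfl
  | ne _ ih => exact ih h
  | app _ _ ih1 ih2 =>
    exact condStar_app (ih1 fun x hx => h x (Or.inl hx)) (ih2 fun x hx => h x (Or.inr hx))

/-- Projection of `→*_{β ∪ R(β)_i}` at stratum `i`, in terms of big-step normalization. -/
def Proj (a : Sig → ℕ) (Rules : Set (CondRule Sig)) (i : ℕ) : Prop :=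
  ∀ (k : ℕ) (t n u : Tm Sig), BS k false t n → Resp a n →
    ReflTransGen (fun x y : Tm Sig => Beta x y ∨ BCondRel Rules i x y) t u →
    ∃ m, (∃ k', BS k' false u m) ∧ Resp a m ∧ ReflTransGen (CondRel Rules i) n m

/-- If `lσ → rσ` by a rule of stratum `i` and the values `σ x` normalize to arity-respecting
`ν x`, then `lν → rν` at stratum `i` of the purely conditional relation: by projection at the
previous stratum the instantiated conditions are still joinable after normalization. -/
theorem condRel_of_rooted {a : Sig → ℕ} (halg : AlgebraicSys Rules)
    (harr : SysRespectsArity a Rules) (hproj : ∀ j, j < i → Proj a Rules j)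
    {ρ : CondRule Sig} {σ ν : ℕ → Tm Sig} (h : RootedBStep Rules i ρ σ)
    (hσ : ∀ x, Tm.FVar ρ.lhs x → ∃ k, BS k false (σ x) (ν x))
    (hν : ∀ x, Tm.FVar ρ.lhs x → Resp a (ν x)) :
    CondRel Rules i (Tm.subst ν ρ.lhs) (Tm.subst ν ρ.rhs) := by
  cases i with
  | zero => exact h.elim
  | succ i =>
    obtain ⟨hρ, hc⟩ := h
    refine CondStep.rule hρ ν fun p hp => ?_
    obtain ⟨v, h1, h2⟩ := hc p hp
    obtain ⟨hf1, hf2⟩ := ρ.fv_conds p hp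
    obtain ⟨ha1, ha2⟩ := (halg ρ hρ).1 p hp
    obtain ⟨hr1, hr2⟩ := (harr ρ hρ).1 p hp
    rw [respectsArity_iff] at hr1 hr2
    have ha1 := alg_of_algebraic ha1
    have ha2 := alg_of_algebraic ha2
    obtain ⟨k1, b1⟩ := ha1.bs_subst fun x hx => hσ x (hf1 x hx)
    obtain ⟨k2, b2⟩ := ha2.bs_subst fun x hx => hσ x (hf2 x hx)
    obtain ⟨m1, ⟨_, c1⟩, -, s1⟩ := hproj i (Nat.lt_succ_self i) _ _ _ _ b1
      (ha1.resp_subst hr1 fun x hx => hν x (hf1 x hx)) h1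
    obtain ⟨m2, ⟨_, c2⟩, -, s2⟩ := hproj i (Nat.lt_succ_self i) _ _ _ _ b2
      (ha2.resp_subst hr2 fun x hx => hν x (hf2 x hx)) h2
    cases c1.det c2
    exact ⟨m1, s1, s2⟩

theorem rootedBStep_mem {ρ : CondRule Sig} {σ : ℕ → Tm Sig} (h : RootedBStep Rules i ρ σ) :
    ρ ∈ Rules := by
  cases i with
  | zero => exact h.elim
  | succ i => exact h.1

/-- Projection of a parallel step, by strong induction on the size of the normalization
derivation of `t`. For a neutral `t` the reduct is again neutral unless the step contracts a
conditional redex at the root. -/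
theorem proj_PB {a : Sig → ℕ} (halg : AlgebraicSys Rules)
    (harr : SysRespectsArity a Rules) (hproj : ∀ j, j < i → Proj a Rules j) (k : ℕ) :
    ∀ (b : Bool) (t n u : Tm Sig), BS k b t n → Resp a n → PB Rules i t u →
      ∃ m b', (∃ k', BS k' b' u m) ∧ Resp a m ∧ ReflTransGen (CondRel Rules i) n m ∧
        (b = true → (b' = true ∧ hd m = hd n) ∨ ∃ ρ ∈ Rules, ∃ ν, n = Tm.subst ν ρ.lhs) := by
  induction k using Nat.strong_induction_on with
  | _ k ih =>
  -- Every flag can be weakened to `false`.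
  have ihf : ∀ j, j < k → ∀ t n u : Tm Sig, BS j false t n → Resp a n → PB Rules i t u →
      ∃ m, (∃ k', BS k' false u m) ∧ Resp a m ∧ ReflTransGen (CondRel Rules i) n m := by
    intro j hj t n u h1 h2 h3
    obtain ⟨m, b', ⟨k', h4⟩, h5, h6, -⟩ := ih j hj false t n u h1 h2 h3
    cases b' with
    | true => exact ⟨m, ⟨_, h4.ne⟩, h5, h6⟩
    | false => exact ⟨m, ⟨_, h4⟩, h5, h6⟩
  have hrule : ∀ (n : Tm Sig) (ρ : CondRule Sig) (σ τ : ℕ → Tm Sig),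
      BS k true (Tm.subst σ ρ.lhs) n → Resp a n → RootedBStep Rules i ρ σ →
      (∀ x, PB Rules i (σ x) (τ x)) →
      ∃ m b', (∃ k', BS k' b' (Tm.subst τ ρ.rhs) m) ∧ Resp a m ∧
        ReflTransGen (CondRel Rules i) n m ∧
        (true = true → (b' = true ∧ hd m = hd n) ∨ ∃ ρ ∈ Rules, ∃ ν, n = Tm.subst ν ρ.lhs) := by
    intro n ρ σ τ hbs hn hroot hστ
    have hρ := rootedBStep_mem hroot
    obtain ⟨rfl, hσ⟩ := (alg_lhs ρ).bs_inv hbs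
    have hν : ∀ x, Tm.FVar ρ.lhs x → Resp a (nfOf (σ x)) :=
      fun x hx => (alg_lhs ρ).resp_of_subst hn hx
    have hτ : ∀ x, ∃ m, Tm.FVar ρ.lhs x → (∃ k', BS k' false (τ x) m) ∧ Resp a m ∧
        ReflTransGen (CondRel Rules i) (nfOf (σ x)) m := by
      intro x
      by_cases hx : Tm.FVar ρ.lhs x
      · obtain ⟨k', -, h1, h2⟩ := hσ x hx
        obtain ⟨m, hm⟩ := ihf k' (h1 rfl) _ _ _ h2 (hν x hx) (hστ x)
        exact ⟨m, fun _ => hm⟩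
      · exact ⟨Tm.var 0, fun h => absurd h hx⟩
    choose μ hμ using hτ
    have hr := alg_of_algebraic (halg ρ hρ).2
    have hrr := (harr ρ hρ).2.2.1
    rw [respectsArity_iff] at hrr
    refine ⟨Tm.subst μ ρ.rhs, false, hr.bs_subst fun x hx => (hμ x (ρ.fv_rhs x hx)).1,
      hr.resp_subst hrr fun x hx => (hμ x (ρ.fv_rhs x hx)).2.1, ?_,
      fun _ => Or.inr ⟨ρ, hρ, _, rfl⟩⟩
    refine ReflTransGen.head (condRel_of_rooted halg harr hproj hroot ?_ hν)
      (hr.condStar_subst fun x hx => (hμ x (ρ.fv_rhs x hx)).2.2)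
    intro x hx
    obtain ⟨k', -, -, h2⟩ := hσ x hx
    exact ⟨k', h2⟩
  intro b t n u hbs hn hpb
  cases hbs with
  | var x =>
    generalize hs : Tm.var x = s at hpb
    cases hpb with
    | var => exact ⟨_, _, ⟨_, BS.var _⟩, trivial, .refl, fun _ => Or.inl ⟨rfl, rfl⟩⟩
    | rule => exact absurd (by rw [← hs]; rfl) (hd_lhs_subst _ _)
    | _ => cases hs
  | sym f =>
    generalize hs : Tm.sym f = s at hpb
    cases hpb with
    | sym => exact ⟨_, _, ⟨_, BS.sym _⟩, trivial, .refl, fun _ => Or.inl ⟨rfl, rfl⟩⟩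
    | rule h1 h2 =>
      refine hrule _ _ _ _ ?_ (by rw [← hs]; trivial) h1 h2
      rw [← hs]
      exact BS.sym f
    | _ => cases hs
  | @app k1 k2 t1 n1 t2 n2 h1 h2 =>
    rcases hpb.app_inv with ⟨p, q, rfl, h3, h4⟩ | ⟨b1, b', s', rfl, -⟩ |
      ⟨ρ, σ, τ, h3, rfl, h4, h5⟩
    · obtain ⟨m1, b', ⟨j1, c1⟩, r1, s1, d1⟩ := ih k1 (by omega) _ _ _ _ h1 hn.1 h3
      obtain ⟨m2, ⟨j2, c2⟩, r2, s2⟩ := ihf k2 (by omega) _ _ _ h2 hn.2.1 h4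
      rcases d1 rfl with ⟨rfl, hhd⟩ | ⟨ρ, hρ, ν, rfl⟩
      · have hhd' : hd (Tm.app m1 m2) = hd (Tm.app n1 n2) := by simp only [hd, hhd]
        refine ⟨_, _, ⟨_, c1.app c2⟩, ⟨r1, r2, fun f l hf => ?_⟩, condStar_app s1 s2,
          fun _ => Or.inl ⟨rfl, hhd'⟩⟩
        exact hn.2.2 f l (hhd' ▸ hf)
      · -- A conditional redex already has all its arguments, so it cannot be applied.
        exfalso
        obtain ⟨f, ls, hl, hlen⟩ := (harr ρ hρ).2.2.2
        have h5 : hd ρ.lhs = some (f, ls.length) := by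
          rw [hl, hd_appList]
          simp [hd]
        have h6 := hn.2.2 f (ls.length + 1) (by simp [hd, hd_subst h5])
        omega
    · cases h1
    · have hbs := h1.app h2
      rw [h3] at hbs
      exact hrule _ _ _ _ hbs hn h4 h5
  | ne h1 =>
    obtain ⟨m, b', h2, h3, h4, -⟩ := ih _ (Nat.lt_succ_self _) _ _ _ _ h1 hn hpb
    exact ⟨m, b', h2, h3, h4, fun h => by cases h⟩
  | lam h1 =>
    obtain ⟨t', rfl, h2⟩ := hpb.lam_inv
    obtain ⟨m, ⟨k', h3⟩, h4, h5⟩ := ihf _ (Nat.lt_succ_self _) _ _ _ h1 hn h2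
    exact ⟨_, _, ⟨_, h3.lam⟩, h4, condStar_lam h5, fun h => by cases h⟩
  | head h1 h2 =>
    obtain ⟨u', h3, h4⟩ := PB.headAux h1 hpb
    obtain ⟨m, ⟨k', h5⟩, h6, h7⟩ := ihf _ (Nat.lt_succ_self _) _ _ _ h2 hn h3
    refine ⟨m, false, ?_, h6, h7, fun h => by cases h⟩
    rcases h4 with rfl | h4
    · exact ⟨_, h5⟩
    · exact ⟨_, h5.head h4⟩

theorem proj_all {a : Sig → ℕ} (halg : AlgebraicSys Rules) (harr : SysRespectsArity a Rules)
    (i : ℕ) : Proj a Rules i := by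
  induction i using Nat.strong_induction_on with
  | _ i ih =>
  intro k t n u hbs hn hred
  induction hred with
  | refl => exact ⟨n, ⟨k, hbs⟩, hn, .refl⟩
  | tail _ hstep ihr =>
    obtain ⟨m, ⟨k', h1⟩, h2, h3⟩ := ihr
    obtain ⟨p, b', ⟨j, h4⟩, h5, h6, -⟩ := proj_PB halg harr ih k' _ _ _ _ h1 h2
      (hstep.elim PB.of_beta PB.of_bcondRel)
    refine ⟨p, ?_, h5, h3.trans h6⟩
    cases b' with
    | true => exact ⟨_, h4.ne⟩
    | false => exact ⟨_, h4⟩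

end BnfProj

/-- For an algebraic system `R` respecting the arity `a`: for every `i`,
if `t ∈ AN_a` and `t →*_{β ∪ R(β)_i} u`, then `u ∈ AN_a` and `βnf(t) →*_{R_i} βnf(u)`. -/
theorem projection_on_bnf_bcond {Sig : Type} (a : Sig → ℕ) (Rules : Set (CondRule Sig))
    (halg : AlgebraicSys Rules) (harr : SysRespectsArity a Rules)
    (i : ℕ) (t u : Tm Sig) (ht : t ∈ ANset a)
    (hred : Relation.ReflTransGen (fun x y : Tm Sig => Beta x y ∨ BCondRel Rules i x y) t u) :
    u ∈ ANset a ∧ ∀ nt nu : Tm Sig, IsBnf t nt → IsBnf u nu →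
      Relation.ReflTransGen (CondRel Rules i) nt nu := by
  obtain ⟨n, hn, hr⟩ := ht
  obtain ⟨k, hk⟩ := BnfProj.BS.of_isBnf hn
  obtain ⟨m, ⟨k', hm⟩, hrm, hstar⟩ := BnfProj.proj_all halg harr i k t n u hk
    ((BnfProj.respectsArity_iff a n).1 hr) hred
  refine ⟨⟨m, hm.isBnf, (BnfProj.respectsArity_iff a m).2 hrm⟩, fun nt nu ht hu => ?_⟩
  obtain ⟨k₁, h₁⟩ := BnfProj.BS.of_isBnf ht
  obtain ⟨k₂, h₂⟩ := BnfProj.BS.of_isBnf hu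
  rw [h₁.det hk, h₂.det hm]
  exact hstar
end

section
/- Let R be a semi-closed, left-linear, algebraic conditional rewrite system respecting an arity a : Σ → ℕ, and let S be a conditionally (R,a)-stable set of terms. For every i ∈ ℕ and all t,u ∈ S, if t →*_{β ∪ R(β)_i} u then there exist terms t', u' with t →β* t' →*_{R_i} u' and u →β* u'. -/
/-!
Write `dev t` for the complete development of `t`, which contracts all its β-redexes at once.
The proof rests on two facts about a stratum `→_{R_i}`.

* β commutes with `→_{R_i}` (`parComm`): a parallel β-step and an `R_i`-step from the same term
  are joined by `R_i`-steps and one parallel β-step. An algebraic left-hand side does not overlap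
  a β-redex, and by linearity β-reducing inside `lσ` gives some `lσ'`. A condition `dσ ↓ c`
  survives, by commutation for the lower stratum, since the reducts of the closed applicative
  term `c` are applicative, hence β-normal.
* On terms respecting the arity, `t →_{R_i} u` gives `dev t →*_{R_i} dev u` (`condRel_dev`).
  The arity forbids applying an instance of a left-hand side to a further argument, so an
  `R_i`-step never creates a β-redex.

Consider the relation `t →β* t' →*_{R_i} u' ←β* u` (`Proj`). It is transitive on a stable set:
given `u →β* u₁ →*_{R_i} w₁ ←β* w`, some iterated development of `u'` is a β-reduct of `u₁`,
because iterated developments are cofinal for β; apply the same number of developments to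
`t' →*_{R_i} u'` and commute `u₁ →*_{R_i} w₁` with β. It therefore suffices to project a single
step `lσ → rσ` of `→_{R(β)_{i+1}}`. By induction on `i` each condition instance `dσ`, which
belongs to the stable set, projects to the common reduct of `dσ` and `c`. The latter is
applicative and is an `R_i`-reduct of `c`, so after sufficiently many developments of `σ` all
conditions hold in `→_{R_i}`.
-/

set_option autoImplicit false

/-! ### Substitution calculus -/

section Substitution

variable {Sig : Type}

/-- Renaming under one binder. -/
def upRen (ξ : ℕ → ℕ) : ℕ → ℕ
  | 0 => 0
  | n + 1 => ξ n + 1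

/-- Renaming of the free de Bruijn indices along `ξ`. -/
def ren (ξ : ℕ → ℕ) : Tm Sig → Tm Sig
  | .var n => .var (ξ n)
  | .app t u => .app (ren ξ t) (ren ξ u)
  | .lam t => .lam (ren (upRen ξ) t)
  | .sym f => .sym f

theorem lift_eq_ren (t : Tm Sig) : ∀ d : ℕ,
    Tm.lift d t = ren (fun n => if n < d then n else n + 1) t := by
  induction t with
  | var n => intro d; simp only [Tm.lift, ren]; split <;> rfl
  | app t u iht ihu => intro d; simp [Tm.lift, ren, iht, ihu]
  | sym f => intro d; rfl
  | lam t ih =>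
    intro d
    simp only [Tm.lift, ren, ih]
    congr 2
    funext n
    cases n with
    | zero => simp [upRen]
    | succ n => simp only [upRen]; split_ifs <;> omega

theorem lift_zero (t : Tm Sig) : Tm.lift 0 t = ren Nat.succ t := by
  rw [lift_eq_ren]; simp

theorem ren_eq_subst (t : Tm Sig) : ∀ ξ : ℕ → ℕ, ren ξ t = Tm.subst (fun n => .var (ξ n)) t := by
  induction t with
  | var n => intro ξ; rfl
  | app t u iht ihu => intro ξ; simp [Tm.subst, ren, iht, ihu]
  | sym f => intro ξ; rfl
  | lam t ih =>
    intro ξ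
    simp only [Tm.subst, ren, ih]
    congr 2
    funext n
    cases n <;> simp [upRen, Tm.up, Tm.lift]

theorem subst_var (t : Tm Sig) : Tm.subst Tm.var t = t := by
  induction t with
  | var n => rfl
  | app t u iht ihu => simp [Tm.subst, iht, ihu]
  | sym f => rfl
  | lam t ih =>
    have : Tm.up (Tm.var : ℕ → Tm Sig) = Tm.var := by
      funext n; cases n <;> simp [Tm.up, Tm.lift]
    simp [Tm.subst, this, ih]

theorem subst_ren (t : Tm Sig) : ∀ (ξ : ℕ → ℕ) (σ : ℕ → Tm Sig),
    Tm.subst σ (ren ξ t) = Tm.subst (fun n => σ (ξ n)) t := by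
  induction t with
  | var n => intro ξ σ; rfl
  | app t u iht ihu => intro ξ σ; simp [Tm.subst, ren, iht, ihu]
  | sym f => intro ξ σ; rfl
  | lam t ih =>
    intro ξ σ
    simp only [Tm.subst, ren, ih]
    congr 2
    funext n
    cases n <;> simp [upRen, Tm.up]

theorem ren_ren (t : Tm Sig) (ξ ζ : ℕ → ℕ) : ren ζ (ren ξ t) = ren (fun n => ζ (ξ n)) t := by
  rw [ren_eq_subst, subst_ren, ren_eq_subst]

theorem ren_subst (t : Tm Sig) : ∀ (ξ : ℕ → ℕ) (σ : ℕ → Tm Sig),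
    ren ξ (Tm.subst σ t) = Tm.subst (fun n => ren ξ (σ n)) t := by
  induction t with
  | var n => intro ξ σ; rfl
  | app t u iht ihu => intro ξ σ; simp [Tm.subst, ren, iht, ihu]
  | sym f => intro ξ σ; rfl
  | lam t ih =>
    intro ξ σ
    simp only [Tm.subst, ren, ih]
    congr 2
    funext n
    cases n <;> simp [upRen, Tm.up, ren, lift_zero, ren_ren]

theorem subst_subst (t : Tm Sig) : ∀ (σ θ : ℕ → Tm Sig),
    Tm.subst θ (Tm.subst σ t) = Tm.subst (fun n => Tm.subst θ (σ n)) t := by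
  induction t with
  | var n => intro σ θ; rfl
  | app t u iht ihu => intro σ θ; simp [Tm.subst, iht, ihu]
  | sym f => intro σ θ; rfl
  | lam t ih =>
    intro σ θ
    simp only [Tm.subst, ih]
    congr 2
    funext n
    cases n <;> simp [Tm.up, Tm.subst, lift_zero, subst_ren, ren_subst]

theorem subst_subst1 (σ : ℕ → Tm Sig) (t u : Tm Sig) :
    Tm.subst σ (Tm.subst1 u t) = Tm.subst1 (Tm.subst σ u) (Tm.subst (Tm.up σ) t) := by
  unfold Tm.subst1
  rw [subst_subst, subst_subst]
  congr 1
  funext n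
  cases n with
  | zero => rfl
  | succ n => simp [Tm.scons, Tm.up, Tm.subst, lift_zero, subst_ren, subst_var]

theorem subst_ext (t : Tm Sig) : ∀ (σ τ : ℕ → Tm Sig), (∀ n, Tm.FVar t n → σ n = τ n) →
    Tm.subst σ t = Tm.subst τ t := by
  induction t with
  | var n => intro σ τ h; exact h n rfl
  | app t u iht ihu =>
    intro σ τ h
    simp only [Tm.subst]
    rw [iht σ τ fun n hn => h n (Or.inl hn), ihu σ τ fun n hn => h n (Or.inr hn)]
  | sym f => intro σ τ h; rfl
  | lam t ih =>
    intro σ τ h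
    simp only [Tm.subst]
    rw [ih]
    intro n hn
    cases n with
    | zero => rfl
    | succ n => simp [Tm.up, h n hn]

theorem closed_subst {c : Tm Sig} (hc : Tm.ClosedTm c) (σ τ : ℕ → Tm Sig) :
    Tm.subst σ c = Tm.subst τ c :=
  subst_ext c σ τ fun n hn => absurd hn (hc n)

theorem one_le_countVar (t : Tm Sig) : ∀ n, Tm.FVar t n → 1 ≤ Tm.countVar t n := by
  induction t with
  | var m => intro n h; simp only [Tm.FVar] at h; simp [Tm.countVar, h]
  | app t u iht ihu =>
    rintro n (h | h)
    · have := iht n h; simp only [Tm.countVar]; omega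
    · have := ihu n h; simp only [Tm.countVar]; omega
  | sym f => intro n h; exact h.elim
  | lam t ih => intro n h; exact ih (n + 1) h

end Substitution

/-! ### Rewrite relations -/

section Rewrite

variable {Sig : Type}

open Relation

/-- Closure of `R` under abstraction, application and substitution. -/
structure IsRewrite (R : Tm Sig → Tm Sig → Prop) : Prop where
  abs : ∀ {t u}, R t u → R (.lam t) (.lam u)
  appL : ∀ {t u} (v), R t u → R (.app t v) (.app u v)
  appR : ∀ {t u} (v), R t u → R (.app v t) (.app v u)
  substC : ∀ {t u} (σ), R t u → R (Tm.subst σ t) (Tm.subst σ u)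

variable {R : Tm Sig → Tm Sig → Prop}

theorem IsRewrite.star_abs (h : IsRewrite R) {t u : Tm Sig} (htu : ReflTransGen R t u) :
    ReflTransGen R (.lam t) (.lam u) :=
  ReflTransGen.lift Tm.lam (fun _ _ => h.abs) _ _ htu

theorem IsRewrite.star_app (h : IsRewrite R) {t u t' u' : Tm Sig} (ht : ReflTransGen R t t')
    (hu : ReflTransGen R u u') : ReflTransGen R (.app t u) (.app t' u') :=
  (ReflTransGen.lift (fun x => Tm.app x u) (fun _ _ => h.appL u) _ _ ht).trans
    (ReflTransGen.lift (fun x => Tm.app t' x) (fun _ _ => h.appR t') _ _ hu)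

theorem IsRewrite.star_subst (h : IsRewrite R) (σ : ℕ → Tm Sig) {t u : Tm Sig}
    (htu : ReflTransGen R t u) : ReflTransGen R (Tm.subst σ t) (Tm.subst σ u) :=
  ReflTransGen.lift (Tm.subst σ) (fun _ _ => h.substC σ) _ _ htu

theorem IsRewrite.star_up (h : IsRewrite R) {σ τ : ℕ → Tm Sig}
    (hστ : ∀ n, ReflTransGen R (σ n) (τ n)) (n : ℕ) :
    ReflTransGen R (Tm.up σ n) (Tm.up τ n) := by
  cases n with
  | zero => exact .refl
  | succ n =>
    simp only [Tm.up, lift_zero, ren_eq_subst]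
    exact h.star_subst _ (hστ n)

theorem IsRewrite.star_subst_pt (h : IsRewrite R) (t : Tm Sig) : ∀ {σ τ : ℕ → Tm Sig},
    (∀ n, ReflTransGen R (σ n) (τ n)) → ReflTransGen R (Tm.subst σ t) (Tm.subst τ t) := by
  induction t with
  | var n => intro σ τ hστ; exact hστ n
  | app t u iht ihu => intro σ τ hστ; exact h.star_app (iht hστ) (ihu hστ)
  | sym f => intro σ τ _; exact .refl
  | lam t ih => intro σ τ hστ; exact h.star_abs (ih (h.star_up hστ))

theorem IsRewrite.star_subst1 (h : IsRewrite R) {t t' u u' : Tm Sig}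
    (ht : ReflTransGen R t t') (hu : ReflTransGen R u u') :
    ReflTransGen R (Tm.subst1 u t) (Tm.subst1 u' t') := by
  refine (h.star_subst _ ht).trans (h.star_subst_pt t' fun n => ?_)
  cases n with
  | zero => exact hu
  | succ n => exact .refl

theorem IsRewrite.joinable_subst (h : IsRewrite R) (σ : ℕ → Tm Sig) {t u : Tm Sig}
    (htu : Joinable R t u) : Joinable R (Tm.subst σ t) (Tm.subst σ u) := by
  obtain ⟨v, h1, h2⟩ := htu
  exact ⟨_, h.star_subst σ h1, h.star_subst σ h2⟩

theorem isRewrite_beta : IsRewrite (Beta (Sig := Sig)) :=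
  ⟨.abs, fun _ => .appL, fun _ => .appR, fun σ => .substC σ⟩

theorem isRewrite_condStep (Rules : Set (CondRule Sig)) (prev : Tm Sig → Tm Sig → Prop) :
    IsRewrite (CondStep Rules prev) :=
  ⟨.abs, fun _ => .appL, fun _ => .appR, fun σ => .substC σ⟩

theorem isRewrite_condRel (Rules : Set (CondRule Sig)) : ∀ i, IsRewrite (CondRel Rules i)
  | 0 => ⟨False.elim, fun _ => False.elim, fun _ => False.elim, fun _ => False.elim⟩
  | _ + 1 => isRewrite_condStep _ _

theorem isRewrite_bCondRel (Rules : Set (CondRule Sig)) : ∀ i, IsRewrite (BCondRel Rules i)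
  | 0 => ⟨False.elim, fun _ => False.elim, fun _ => False.elim, fun _ => False.elim⟩
  | _ + 1 => isRewrite_condStep _ _

theorem isRewrite_union (Rules : Set (CondRule Sig)) (i : ℕ) :
    IsRewrite (fun a b => Beta a b ∨ BCondRel Rules i a b) :=
  ⟨Or.imp isRewrite_beta.abs (isRewrite_bCondRel Rules i).abs,
    fun v => Or.imp (isRewrite_beta.appL v) ((isRewrite_bCondRel Rules i).appL v),
    fun v => Or.imp (isRewrite_beta.appR v) ((isRewrite_bCondRel Rules i).appR v),
    fun σ => Or.imp (isRewrite_beta.substC σ) ((isRewrite_bCondRel Rules i).substC σ)⟩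

/-- Conditional rewriting closed under contexts only. It agrees with `CondStep` as soon as
`prev` is a rewrite relation, and can be inverted along the structure of the source term. -/
inductive CStep (Rules : Set (CondRule Sig)) (prev : Tm Sig → Tm Sig → Prop) :
    Tm Sig → Tm Sig → Prop
  | rule {ρ : CondRule Sig} (hρ : ρ ∈ Rules) (σ : ℕ → Tm Sig)
      (hc : ∀ p ∈ ρ.conds, Joinable prev (Tm.subst σ p.1) (Tm.subst σ p.2)) {t u : Tm Sig}
      (ht : t = Tm.subst σ ρ.lhs) (hu : u = Tm.subst σ ρ.rhs) : CStep Rules prev t u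
  | abs {t u : Tm Sig} : CStep Rules prev t u → CStep Rules prev (.lam t) (.lam u)
  | appL {t u : Tm Sig} (v : Tm Sig) : CStep Rules prev t u →
      CStep Rules prev (.app t v) (.app u v)
  | appR {t u : Tm Sig} (v : Tm Sig) : CStep Rules prev t u →
      CStep Rules prev (.app v t) (.app v u)

theorem CStep.substC {Rules : Set (CondRule Sig)} {prev : Tm Sig → Tm Sig → Prop}
    (hp : IsRewrite prev) {t u : Tm Sig} (h : CStep Rules prev t u) :
    ∀ θ : ℕ → Tm Sig, CStep Rules prev (Tm.subst θ t) (Tm.subst θ u) := by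
  induction h with
  | rule hρ σ hc ht hu =>
    intro θ
    subst ht hu
    refine .rule hρ (fun n => Tm.subst θ (σ n)) (fun p hp' => ?_) (subst_subst _ _ _)
      (subst_subst _ _ _)
    rw [← subst_subst, ← subst_subst]
    exact hp.joinable_subst θ (hc p hp')
  | abs _ ih => intro θ; exact .abs (ih _)
  | appL v _ ih => intro θ; exact .appL _ (ih _)
  | appR v _ ih => intro θ; exact .appR _ (ih _)

theorem cStep_of_condStep {Rules : Set (CondRule Sig)} {prev : Tm Sig → Tm Sig → Prop}
    (hp : IsRewrite prev) {t u : Tm Sig} (h : CondStep Rules prev t u) :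
    CStep Rules prev t u := by
  induction h with
  | rule hρ σ hc => exact .rule hρ σ hc rfl rfl
  | abs _ ih => exact .abs ih
  | appL _ ih => exact .appL _ ih
  | appR _ ih => exact .appR _ ih
  | substC σ _ ih => exact ih.substC hp σ

theorem barRel_of_condStep {Rules : Set (CondRule Sig)} {prev : Tm Sig → Tm Sig → Prop}
    {t u : Tm Sig} (h : CondStep Rules prev t u) : BarRel Rules t u := by
  induction h with
  | rule hρ σ hc => exact .ruleRhs hρ σ
  | abs _ ih => exact .abs ih
  | appL _ ih => exact .appL ih
  | appR _ ih => exact .appR ih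
  | substC σ _ ih => exact .substC σ ih

end Rewrite

/-! ### Parallel β-reduction and complete developments -/

section Parallel

variable {Sig : Type}

open Relation

/-- Parallel β-reduction, without a constructor for substitution so that it can be inverted
along the structure of the source term. -/
inductive Par : Tm Sig → Tm Sig → Prop
  | var (n : ℕ) : Par (.var n) (.var n)
  | sym (f : Sig) : Par (.sym f) (.sym f)
  | app {t t' u u' : Tm Sig} : Par t t' → Par u u' → Par (.app t u) (.app t' u')
  | abs {t t' : Tm Sig} : Par t t' → Par (.lam t) (.lam t')
  | beta {t t' u u' : Tm Sig} : Par t t' → Par u u' →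
      Par (.app (.lam t) u) (Tm.subst1 u' t')

theorem Par.refl (t : Tm Sig) : Par t t := by
  induction t with
  | var n => exact .var n
  | app t u iht ihu => exact .app iht ihu
  | sym f => exact .sym f
  | lam t ih => exact .abs ih

/-- Stability of parallel reduction under pairs of substitutions from a class `P` of pointwise
related pairs that is closed under `Tm.up`. Renamings come first (`Par.ren`), because closure
under `Tm.up` of the class of all pointwise related pairs relies on them. -/
theorem Par.subst_aux {t t' : Tm Sig} (h : Par t t') : ∀ {P : (ℕ → Tm Sig) → (ℕ → Tm Sig) → Prop},
    (∀ σ τ, P σ τ → (∀ n, Par (σ n) (τ n)) ∧ P (Tm.up σ) (Tm.up τ)) →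
    ∀ {σ τ : ℕ → Tm Sig}, P σ τ → Par (Tm.subst σ t) (Tm.subst τ t') := by
  intro P hP
  induction h with
  | var n => intro σ τ hστ; exact (hP σ τ hστ).1 n
  | sym f => intro σ τ _; exact .sym f
  | app _ _ ih1 ih2 => intro σ τ hστ; exact .app (ih1 hστ) (ih2 hστ)
  | abs _ ih => intro σ τ hστ; exact .abs (ih (hP σ τ hστ).2)
  | beta _ _ ih1 ih2 =>
    intro σ τ hστ
    rw [subst_subst1]
    exact .beta (ih1 (hP σ τ hστ).2) (ih2 hστ)

theorem Par.ren {t t' : Tm Sig} (h : Par t t') (ξ : ℕ → ℕ) : Par (ren ξ t) (ren ξ t') := by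
  rw [ren_eq_subst, ren_eq_subst]
  refine h.subst_aux (P := fun σ τ => σ = τ ∧ ∃ ζ : ℕ → ℕ, σ = fun n => .var (ζ n)) ?_
    ⟨rfl, ξ, rfl⟩
  rintro _ _ ⟨rfl, ζ, rfl⟩
  refine ⟨fun n => .refl _, rfl, upRen ζ, ?_⟩
  funext n
  cases n <;> simp [upRen, Tm.up, Tm.lift]

theorem Par.subst {t t' : Tm Sig} (h : Par t t') {σ τ : ℕ → Tm Sig}
    (hστ : ∀ n, Par (σ n) (τ n)) : Par (Tm.subst σ t) (Tm.subst τ t') := by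
  refine h.subst_aux (P := fun σ τ => ∀ n, Par (σ n) (τ n)) ?_ hστ
  intro σ τ h
  refine ⟨h, fun n => ?_⟩
  cases n with
  | zero => exact .refl _
  | succ n => simp only [Tm.up, lift_zero]; exact (h n).ren _

theorem Par.subst1 {t t' u u' : Tm Sig} (ht : Par t t') (hu : Par u u') :
    Par (Tm.subst1 u t) (Tm.subst1 u' t') := by
  refine ht.subst fun n => ?_
  cases n with
  | zero => exact hu
  | succ n => exact .refl _

theorem par_of_beta {t u : Tm Sig} (h : Beta t u) : Par t u := by
  induction h with
  | beta t u => exact .beta (.refl _) (.refl _)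
  | abs _ ih => exact .abs ih
  | appL _ ih => exact .app ih (.refl _)
  | appR _ ih => exact .app (.refl _) ih
  | substC σ _ ih => exact ih.subst fun n => .refl _

theorem Par.betaStar {t u : Tm Sig} (h : Par t u) : ReflTransGen Beta t u := by
  induction h with
  | var n => exact .refl
  | sym f => exact .refl
  | app _ _ ih1 ih2 => exact isRewrite_beta.star_app ih1 ih2
  | abs _ ih => exact isRewrite_beta.star_abs ih
  | beta _ _ ih1 ih2 =>
    exact (isRewrite_beta.star_app (isRewrite_beta.star_abs ih1) ih2).tail (.beta _ _)

/-- Takahashi's complete development: contract all β-redexes of a term simultaneously. -/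
def dev : Tm Sig → Tm Sig
  | .var n => .var n
  | .sym f => .sym f
  | .lam t => .lam (dev t)
  | .app (.lam b) u => Tm.subst1 (dev u) (dev b)
  | .app t u => .app (dev t) (dev u)

theorem dev_app {t : Tm Sig} (ht : ∀ b, t ≠ .lam b) (u : Tm Sig) :
    dev (.app t u) = .app (dev t) (dev u) := by
  cases t with
  | lam b => exact absurd rfl (ht b)
  | _ => simp [dev]

/-- The triangle property. -/
theorem Par.dev {t u : Tm Sig} (h : Par t u) : Par u (dev t) := by
  induction h with
  | var n => exact .var n
  | sym f => exact .sym f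
  | abs _ ih => exact .abs ih
  | beta _ _ ih1 ih2 => exact ih1.subst1 ih2
  | @app t t' u u' h1 h2 ih1 ih2 =>
    by_cases ht : ∃ b, t = .lam b
    · obtain ⟨b, rfl⟩ := ht
      cases h1 with
      | abs hb =>
        simp only [_root_.dev] at ih1 ⊢
        cases ih1 with
        | abs hb' => exact .beta hb' ih2
    · rw [dev_app fun b hb => ht ⟨b, hb⟩]
      exact .app ih1 ih2

theorem par_dev (t : Tm Sig) : Par t (dev t) := (Par.refl t).dev

theorem betaStar_dev_iter (t : Tm Sig) : ∀ k, ReflTransGen Beta t (dev^[k] t)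
  | 0 => .refl
  | k + 1 => by
    rw [Function.iterate_succ_apply']
    exact (betaStar_dev_iter t k).trans (par_dev _).betaStar

theorem dev_mono {t u : Tm Sig} (h : ReflTransGen Beta t u) :
    ReflTransGen Beta (dev t) (dev u) := by
  induction h with
  | refl => exact .refl
  | tail _ h ih => exact ih.trans (par_of_beta h).dev.dev.betaStar

theorem dev_iter_mono {t u : Tm Sig} (h : ReflTransGen Beta t u) :
    ∀ k, ReflTransGen Beta (dev^[k] t) (dev^[k] u)
  | 0 => h
  | k + 1 => by
    rw [Function.iterate_succ_apply', Function.iterate_succ_apply']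
    exact dev_mono (dev_iter_mono h k)

/-- Iterated complete developments are cofinal among the β-reducts of a term. -/
theorem dev_cofinal {t u : Tm Sig} (h : ReflTransGen Beta t u) :
    ∃ k, ReflTransGen Beta u (dev^[k] t) := by
  induction h with
  | refl => exact ⟨0, .refl⟩
  | tail _ h ih =>
    obtain ⟨k, hk⟩ := ih
    refine ⟨k + 1, ?_⟩
    rw [Function.iterate_succ_apply']
    exact (par_of_beta h).dev.betaStar.trans (dev_mono hk)

end Parallel

/-! ### Algebraic and applicative terms -/

section Algebraic

variable {Sig : Type}

open Relation

/-- Non-variable algebraic terms, by recursion on the binary application structure. -/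
def Neu : Tm Sig → Prop
  | .sym _ => True
  | .app t u => Neu t ∧ (Neu u ∨ ∃ n, u = .var n)
  | .var _ => False
  | .lam _ => False

theorem neu_appList (ts : List (Tm Sig)) : ∀ h : Tm Sig, Neu h →
    (∀ t ∈ ts, Neu t ∨ ∃ n, t = .var n) → Neu (Tm.appList h ts) := by
  induction ts with
  | nil => intro h hh _; exact hh
  | cons t ts ih =>
    intro h hh hts
    exact ih _ ⟨hh, hts t (by simp)⟩ fun s hs => hts s (by simp [hs])

theorem Algebraic.neu {t : Tm Sig} (h : Tm.Algebraic t) : Neu t ∨ ∃ n, t = .var n := by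
  induction h with
  | var n => exact Or.inr ⟨n, rfl⟩
  | symApp f ts _ ih => exact Or.inl (neu_appList ts _ trivial ih)

theorem neu_lhs (ρ : CondRule Sig) : Neu ρ.lhs :=
  (Algebraic.neu ρ.lhs_alg).resolve_right fun ⟨n, hn⟩ => ρ.lhs_not_var n hn

theorem Neu.subst_ne_lam {t : Tm Sig} (h : Neu t) (σ : ℕ → Tm Sig) (b : Tm Sig) :
    Tm.subst σ t ≠ .lam b := by
  cases t with
  | var n => exact h.elim
  | lam t => exact h.elim
  | sym f => simp [Tm.subst]
  | app t u => simp [Tm.subst]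

/-- An instance of an algebraic term has no β-redex outside the substitution. -/
theorem Neu.subst_ne_redex {t : Tm Sig} (h : Neu t) (σ : ℕ → Tm Sig) (b u : Tm Sig) :
    Tm.subst σ t ≠ .app (.lam b) u := by
  cases t with
  | app t v =>
    intro he
    simp only [Tm.subst, Tm.app.injEq] at he
    exact h.1.subst_ne_lam σ b he.1
  | var n => exact h.elim
  | lam t => exact h.elim
  | sym f => simp [Tm.subst]

theorem dev_subst {t : Tm Sig} (σ : ℕ → Tm Sig) : (Neu t ∨ ∃ n, t = .var n) →
    dev (Tm.subst σ t) = Tm.subst (fun n => dev (σ n)) t := by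
  induction t with
  | var n => intro _; rfl
  | sym f => intro _; rfl
  | lam t _ => rintro (h | ⟨n, h⟩) <;> cases h
  | app t u iht ihu =>
    rintro (h | ⟨n, h⟩)
    · simp only [Tm.subst]
      rw [dev_app (h.1.subst_ne_lam σ), iht (Or.inl h.1), ihu h.2]
    · cases h

theorem dev_iter_subst {t : Tm Sig} (h : Neu t ∨ ∃ n, t = .var n) (σ : ℕ → Tm Sig) :
    ∀ k, dev^[k] (Tm.subst σ t) = Tm.subst (fun n => dev^[k] (σ n)) t
  | 0 => rfl
  | k + 1 => by
    rw [Function.iterate_succ_apply', dev_iter_subst h σ k, dev_subst _ h]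
    simp only [Function.iterate_succ_apply']

/-- Parallel reducts of an instance of a linear algebraic term are instances of the same term:
linearity lets the reducts of the separate arguments be glued to one substitution. -/
theorem par_subst_inv {l : Tm Sig} (σ : ℕ → Tm Sig) : (Neu l ∨ ∃ n, l = .var n) →
    Tm.LinearTm l → ∀ {t' : Tm Sig}, Par (Tm.subst σ l) t' →
    ∃ σ' : ℕ → Tm Sig, t' = Tm.subst σ' l ∧ ∀ n, Par (σ n) (σ' n) := by
  induction l with
  | var n =>
    intro _ _ t' h
    refine ⟨fun m => if m = n then t' else σ m, by simp [Tm.subst], fun m => ?_⟩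
    dsimp only
    split
    · next hm => subst hm; exact h
    · exact .refl _
  | sym f =>
    intro _ _ t' h
    cases h
    exact ⟨σ, rfl, fun n => .refl _⟩
  | lam t _ => rintro (h | ⟨n, h⟩) <;> cases h
  | app p q ihp ihq =>
    rintro (hn | ⟨n, hn⟩) hlin t' h
    swap
    · cases hn
    have hlin' : ∀ n, Tm.countVar p n + Tm.countVar q n ≤ 1 := hlin
    simp only [Tm.subst] at h
    generalize hp' : Tm.subst σ p = P at h
    cases h with
    | beta _ _ => exact absurd hp' (hn.1.subst_ne_lam σ _)
    | app h1 h2 =>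
      subst hp'
      obtain ⟨σ₁, rfl, hσ₁⟩ := ihp (Or.inl hn.1) (fun n => by have := hlin' n; omega) h1
      obtain ⟨σ₂, rfl, hσ₂⟩ := ihq hn.2 (fun n => by have := hlin' n; omega) h2
      classical
      refine ⟨fun n => if Tm.FVar p n then σ₁ n else σ₂ n, ?_, fun n => ?_⟩
      · simp only [Tm.subst]
        congr 1
        · exact subst_ext _ _ _ fun n hn => by simp [hn]
        · refine subst_ext _ _ _ fun n hq => ?_
          have : ¬ Tm.FVar p n := fun hp => by
            have h1 := one_le_countVar p n hp
            have h2 := one_le_countVar q n hq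
            have := hlin' n
            omega
          simp [this]
      · dsimp only
        split
        · exact hσ₁ n
        · exact hσ₂ n

theorem neu_applicative {t : Tm Sig} : (Neu t ∨ ∃ n, t = .var n) → Tm.Applicative t := by
  induction t with
  | var n => intro _; exact .var n
  | sym f => intro _; exact .sym f
  | lam t _ => rintro (h | ⟨n, h⟩) <;> cases h
  | app t u iht ihu =>
    rintro (h | ⟨n, h⟩)
    · exact .app (iht (Or.inl h.1)) (ihu h.2)
    · cases h

theorem Applicative.subst {t : Tm Sig} (h : Tm.Applicative t) {σ : ℕ → Tm Sig} :
    (∀ n, Tm.FVar t n → Tm.Applicative (σ n)) → Tm.Applicative (Tm.subst σ t) := by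
  induction h with
  | var n => intro hσ; exact hσ n rfl
  | sym f => intro _; exact .sym f
  | app _ _ ih1 ih2 =>
    intro hσ
    exact .app (ih1 fun n hn => hσ n (Or.inl hn)) (ih2 fun n hn => hσ n (Or.inr hn))

theorem applicative_of_subst {t : Tm Sig} {σ : ℕ → Tm Sig} :
    Tm.Applicative (Tm.subst σ t) → ∀ n, Tm.FVar t n → Tm.Applicative (σ n) := by
  induction t with
  | var m => intro h n hn; cases hn; exact h
  | sym f => intro _ n hn; exact hn.elim
  | lam t _ => intro h; cases h
  | app t u iht ihu =>
    intro h n hn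
    cases h with
    | app h1 h2 => exact hn.elim (iht h1 n) (ihu h2 n)

theorem par_applicative {t u : Tm Sig} (h : Par t u) : Tm.Applicative t → u = t := by
  induction h with
  | var n => intro _; rfl
  | sym f => intro _; rfl
  | abs _ _ => intro h; cases h
  | beta _ _ _ _ => intro h; cases h with | app h _ => cases h
  | app _ _ ih1 ih2 => intro h; cases h with | app h1 h2 => rw [ih1 h1, ih2 h2]

theorem betaStar_applicative {t u : Tm Sig} (h : ReflTransGen Beta t u)
    (ht : Tm.Applicative t) : u = t := by
  induction h with
  | refl => rfl
  | tail _ h ih => subst ih; exact par_applicative (par_of_beta h) ht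

end Algebraic

/-! ### Conditional rewriting of applicative terms -/

section Applicative

variable {Sig : Type} {Rules : Set (CondRule Sig)}

open Relation

theorem cStep_applicative (halg : AlgebraicSys Rules) {prev : Tm Sig → Tm Sig → Prop}
    {t u : Tm Sig} (h : CStep Rules prev t u) : Tm.Applicative t → Tm.Applicative u := by
  induction h with
  | @rule ρ hρ σ hc t u ht hu =>
    intro h
    subst ht hu
    exact Applicative.subst (neu_applicative (Algebraic.neu (halg ρ hρ).2))
      fun n hn => applicative_of_subst h n (ρ.fv_rhs n hn)
  | abs _ _ => intro h; cases h
  | appL v _ ih => intro h; cases h with | app h1 h2 => exact .app (ih h1) h2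
  | appR v _ ih => intro h; cases h with | app h1 h2 => exact .app h1 (ih h2)

theorem condRel_star_applicative (halg : AlgebraicSys Rules) {i : ℕ} {t u : Tm Sig}
    (h : ReflTransGen (CondRel Rules i) t u) (ht : Tm.Applicative t) : Tm.Applicative u := by
  induction h with
  | refl => exact ht
  | tail _ h ih =>
    cases i with
    | zero => exact h.elim
    | succ i => exact cStep_applicative halg (cStep_of_condStep (isRewrite_condRel _ _) h) ih

/-- On applicative terms there is no β-reduction, neither in the term nor in the conditions,
so β-conditional rewriting is just conditional rewriting. -/
theorem applicative_project (halg : AlgebraicSys Rules) (i : ℕ) : ∀ {t u : Tm Sig},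
    ReflTransGen (fun x y => Beta x y ∨ BCondRel Rules i x y) t u → Tm.Applicative t →
    ReflTransGen (CondRel Rules i) t u ∧ Tm.Applicative u := by
  induction i with
  | zero =>
    intro t u h ht
    have := betaStar_applicative
      (ReflTransGen.mono (fun x y (hxy : Beta x y ∨ False) => hxy.resolve_right id) _ _ h) ht
    subst this
    exact ⟨.refl, ht⟩
  | succ i IH =>
    have step : ∀ {t u : Tm Sig},
        CStep Rules (fun x y => Beta x y ∨ BCondRel Rules i x y) t u → Tm.Applicative t →
        CondRel Rules (i + 1) t u := by
      intro t u h
      induction h with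
      | @rule ρ hρ σ hc t u ht hu =>
        intro h
        subst ht hu
        refine CondStep.rule hρ σ fun p hp => ?_
        have hσ := applicative_of_subst h
        have h1 : Tm.Applicative (Tm.subst σ p.1) :=
          Applicative.subst (neu_applicative (Algebraic.neu ((halg ρ hρ).1 p hp).1))
            fun n hn => hσ n ((ρ.fv_conds p hp).1 n hn)
        have h2 : Tm.Applicative (Tm.subst σ p.2) :=
          Applicative.subst (neu_applicative (Algebraic.neu ((halg ρ hρ).1 p hp).2))
            fun n hn => hσ n ((ρ.fv_conds p hp).2 n hn)
        obtain ⟨v, hv1, hv2⟩ := hc p hp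
        exact ⟨v, (IH hv1 h1).1, (IH hv2 h2).1⟩
      | abs _ _ => intro h; cases h
      | appL v _ ih => intro h; cases h with | app h1 h2 => exact CondStep.appL (ih h1)
      | appR v _ ih => intro h; cases h with | app h1 h2 => exact CondStep.appR (ih h2)
    intro t u h ht
    induction h with
    | refl => exact ⟨.refl, ht⟩
    | tail _ h ih =>
      obtain ⟨h1, h2⟩ := ih
      rcases h with h | h
      · have := par_applicative (par_of_beta h) h2
        subst this
        exact ⟨h1, h2⟩
      · have hc := cStep_of_condStep (isRewrite_union _ _) h
        exact ⟨h1.tail (step hc h2), cStep_applicative halg hc h2⟩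

end Applicative

/-! ### Commutation of β with conditional rewriting -/

section Commutation

variable {Sig : Type} {Rules : Set (CondRule Sig)}

open Relation

/-- One parallel β-step commutes with one conditional step of stratum `i`. -/
def ParComm (Rules : Set (CondRule Sig)) (i : ℕ) : Prop :=
  ∀ ⦃t t' u : Tm Sig⦄, Par t t' → CondRel Rules i t u →
    ∃ v, ReflTransGen (CondRel Rules i) t' v ∧ Par u v

theorem ParComm.par_star {i : ℕ} (h : ParComm Rules i) {t t' u : Tm Sig} (hp : Par t t')
    (hr : ReflTransGen (CondRel Rules i) t u) :
    ∃ v, ReflTransGen (CondRel Rules i) t' v ∧ Par u v := by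
  induction hr with
  | refl => exact ⟨t', .refl, hp⟩
  | tail _ hr ih =>
    obtain ⟨v, h1, h2⟩ := ih
    obtain ⟨w, h3, h4⟩ := h h2 hr
    exact ⟨w, h1.trans h3, h4⟩

theorem ParComm.star_star {i : ℕ} (h : ParComm Rules i) {t t' u : Tm Sig}
    (hp : ReflTransGen Beta t t') (hr : ReflTransGen (CondRel Rules i) t u) :
    ∃ v, ReflTransGen (CondRel Rules i) t' v ∧ ReflTransGen Beta u v := by
  induction hp with
  | refl => exact ⟨u, hr, .refl⟩
  | tail _ hp ih =>
    obtain ⟨v, h1, h2⟩ := ih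
    obtain ⟨w, h3, h4⟩ := h.par_star (par_of_beta hp) h1
    exact ⟨w, h3, h2.trans h4.betaStar⟩

/-- Satisfied conditions stay satisfied under β-reduction of the substitution: the right-hand
side `c` of a condition does not depend on the substitution, and the common reduct, being a reduct
of the applicative term `c`, is itself applicative, so β leaves it unchanged. -/
theorem ParComm.conds {i : ℕ} (h : ParComm Rules i) (hsc : SemiClosed Rules)
    (halg : AlgebraicSys Rules) {ρ : CondRule Sig} (hρ : ρ ∈ Rules) {p : Tm Sig × Tm Sig}
    (hp : p ∈ ρ.conds) {σ σ' : ℕ → Tm Sig} (hσ : ∀ n, ReflTransGen Beta (σ n) (σ' n))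
    (hj : Joinable (CondRel Rules i) (Tm.subst σ p.1) (Tm.subst σ p.2)) :
    Joinable (CondRel Rules i) (Tm.subst σ' p.1) (Tm.subst σ' p.2) := by
  obtain ⟨v, h1, h2⟩ := hj
  obtain ⟨hca, hcc⟩ := hsc ρ hρ p hp
  have hv : Tm.Applicative v :=
    condRel_star_applicative halg h2 (Applicative.subst hca fun n hn => absurd hn (hcc n))
  obtain ⟨w, h3, h4⟩ := h.star_star (isRewrite_beta.star_subst_pt p.1 hσ) h1
  rw [betaStar_applicative h4 hv] at h3
  exact ⟨v, h3, by rwa [closed_subst hcc σ' σ]⟩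

theorem parComm (hsc : SemiClosed Rules) (hll : LeftLinear Rules) (halg : AlgebraicSys Rules) :
    ∀ i, ParComm Rules i := by
  intro i
  induction i with
  | zero => intro t t' u _ h; exact h.elim
  | succ i IH =>
    have hR := isRewrite_condRel Rules (i + 1)
    have root : ∀ {ρ : CondRule Sig}, ρ ∈ Rules → ∀ {σ : ℕ → Tm Sig},
        (∀ p ∈ ρ.conds, Joinable (CondRel Rules i) (Tm.subst σ p.1) (Tm.subst σ p.2)) →
        ∀ {t' : Tm Sig}, Par (Tm.subst σ ρ.lhs) t' →
        ∃ v, ReflTransGen (CondRel Rules (i + 1)) t' v ∧ Par (Tm.subst σ ρ.rhs) v := by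
      intro ρ hρ σ hc t' ht'
      obtain ⟨σ', rfl, hσ'⟩ := par_subst_inv σ (Or.inl (neu_lhs ρ)) (hll ρ hρ) ht'
      exact ⟨Tm.subst σ' ρ.rhs, .single (CondStep.rule hρ σ' fun p hp =>
        IH.conds hsc halg hρ hp (fun n => (hσ' n).betaStar) (hc p hp)),
        (Par.refl _).subst hσ'⟩
    have main : ∀ {t t' : Tm Sig}, Par t t' → ∀ {u : Tm Sig},
        CStep Rules (CondRel Rules i) t u →
        ∃ v, ReflTransGen (CondRel Rules (i + 1)) t' v ∧ Par u v := by
      intro t t' hp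
      induction hp with
      | var n =>
        intro u h
        cases h with
        | rule hρ σ hc ht hu => subst hu; exact root hρ hc (ht ▸ .var n)
      | sym f =>
        intro u h
        cases h with
        | rule hρ σ hc ht hu => subst hu; exact root hρ hc (ht ▸ .sym f)
      | abs h ih =>
        intro u h'
        cases h' with
        | rule hρ σ hc ht hu => subst hu; exact root hρ hc (ht ▸ .abs h)
        | abs h' =>
          obtain ⟨v, h1, h2⟩ := ih h'
          exact ⟨_, hR.star_abs h1, .abs h2⟩
      | app hl hr ihl ihr =>
        intro u h'
        cases h' with
        | rule hρ σ hc ht hu => subst hu; exact root hρ hc (ht ▸ .app hl hr)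
        | appL v h' =>
          obtain ⟨v, h1, h2⟩ := ihl h'
          exact ⟨_, hR.star_app h1 .refl, .app h2 hr⟩
        | appR v h' =>
          obtain ⟨v, h1, h2⟩ := ihr h'
          exact ⟨_, hR.star_app .refl h1, .app hl h2⟩
      | beta hl hr ihl ihr =>
        intro u h'
        cases h' with
        | rule _ σ _ ht _ => exact absurd ht.symm ((neu_lhs _).subst_ne_redex σ _ _)
        | appL v h' =>
          cases h' with
          | rule _ σ _ ht _ => exact absurd ht.symm ((neu_lhs _).subst_ne_lam σ _)
          | abs h' =>
            obtain ⟨v, h1, h2⟩ := ihl h'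
            exact ⟨_, hR.star_subst1 h1 .refl, .beta h2 hr⟩
        | appR v h' =>
          obtain ⟨v, h1, h2⟩ := ihr h'
          exact ⟨_, hR.star_subst1 .refl h1, .beta hl h2⟩
    intro t t' u hp h
    exact main hp (cStep_of_condStep (isRewrite_condRel Rules i) h)

end Commutation

/-! ### Complete developments preserve conditional rewriting -/

section Development

variable {Sig : Type} {Rules : Set (CondRule Sig)} {a : Sig → ℕ}

open Relation

theorem RespectsArity.sub {t u : Tm Sig} (h : RespectsArity a t)
    (hs : ∀ s, Tm.Subterm s u → Tm.Subterm s t) : RespectsArity a u :=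
  fun f ts hf => h f ts (hs _ hf)

theorem subst_appList (σ : ℕ → Tm Sig) (ts : List (Tm Sig)) : ∀ h : Tm Sig,
    Tm.subst σ (Tm.appList h ts) = Tm.appList (Tm.subst σ h) (ts.map (Tm.subst σ)) := by
  induction ts with
  | nil => intro h; rfl
  | cons t ts ih => intro h; simp [Tm.appList, ih, Tm.subst]

theorem appList_concat (v : Tm Sig) (ts : List (Tm Sig)) : ∀ h : Tm Sig,
    Tm.appList h (ts ++ [v]) = .app (Tm.appList h ts) v := by
  induction ts with
  | nil => intro h; rfl
  | cons t ts ih => intro h; simp [Tm.appList, ih]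

/-- In an arity-respecting term an instance of a left-hand side is never applied, because the
left-hand side already gives its head symbol all the arguments it may have. -/
theorem lhs_not_applied (harr : SysRespectsArity a Rules) {ρ : CondRule Sig} (hρ : ρ ∈ Rules)
    (σ : ℕ → Tm Sig) (v : Tm Sig) : ¬ RespectsArity a (.app (Tm.subst σ ρ.lhs) v) := by
  intro h
  obtain ⟨-, -, -, f, ls, hl, hlen⟩ := harr ρ hρ
  rw [hl, subst_appList, ← appList_concat] at h
  have := h f _ (.refl _)
  simp [hlen] at this

/-- A conditional step projects to complete developments of arity-respecting terms. Arity
matters when the step happens in function position: it cannot create a new β-redex there. -/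
theorem condRel_dev (hsc : SemiClosed Rules) (hll : LeftLinear Rules) (halg : AlgebraicSys Rules)
    (harr : SysRespectsArity a Rules) {i : ℕ} {t u : Tm Sig} (h : CondRel Rules i t u)
    (hta : RespectsArity a t) : ReflTransGen (CondRel Rules i) (dev t) (dev u) := by
  cases i with
  | zero => exact h.elim
  | succ i =>
  have hR := isRewrite_condRel Rules (i + 1)
  have root : ∀ {ρ : CondRule Sig}, ρ ∈ Rules → ∀ {σ : ℕ → Tm Sig},
      (∀ p ∈ ρ.conds, Joinable (CondRel Rules i) (Tm.subst σ p.1) (Tm.subst σ p.2)) →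
      ReflTransGen (CondRel Rules (i + 1)) (dev (Tm.subst σ ρ.lhs))
        (dev (Tm.subst σ ρ.rhs)) := by
    intro ρ hρ σ hc
    rw [dev_subst _ (Or.inl (neu_lhs ρ)), dev_subst _ (Algebraic.neu (halg ρ hρ).2)]
    exact .single (CondStep.rule hρ _ fun p hp =>
      (parComm hsc hll halg i).conds hsc halg hρ hp (fun n => (par_dev (σ n)).betaStar)
        (hc p hp))
  replace h := cStep_of_condStep (isRewrite_condRel Rules i) h
  induction t using dev.induct generalizing u with
  | case1 n =>
    cases h with
    | rule hρ σ hc ht hu => rw [ht, hu]; exact root hρ hc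
  | case2 f =>
    cases h with
    | rule hρ σ hc ht hu => rw [ht, hu]; exact root hρ hc
  | case3 t ih =>
    cases h with
    | rule hρ σ hc ht hu => rw [ht, hu]; exact root hρ hc
    | abs h => exact hR.star_abs (ih (hta.sub fun _ => .lam) h)
  | case4 b v ihv ihb =>
    cases h with
    | rule hρ σ hc ht hu => rw [ht, hu]; exact root hρ hc
    | appL v h =>
      cases h with
      | rule _ σ _ ht _ => exact absurd ht.symm ((neu_lhs _).subst_ne_lam σ _)
      | abs h => exact hR.star_subst1 (ihb (hta.sub fun _ hs => .appL (.lam hs)) h) .refl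
    | appR v h => exact hR.star_subst1 .refl (ihv (hta.sub fun _ => .appR) h)
  | case5 t v hnl iht ihv =>
    have hnl' : ∀ b, t ≠ .lam b := fun b hb => hnl b hb
    cases h with
    | rule hρ σ hc ht hu => rw [ht, hu]; exact root hρ hc
    | @appL _ u v h =>
      have hu : ∀ b, u ≠ .lam b := by
        rintro b rfl
        cases h with
        | rule hρ σ _ ht _ => exact lhs_not_applied harr hρ σ v (ht ▸ hta)
        | abs h => exact hnl' _ rfl
      rw [dev_app hnl', dev_app hu]
      exact hR.star_app (iht (hta.sub fun _ => .appL) h) .refl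
    | appR v h =>
      rw [dev_app hnl', dev_app hnl']
      exact hR.star_app .refl (ihv (hta.sub fun _ => .appR) h)

end Development

/-! ### Projection on stable sets -/

section Projection

variable {Sig : Type} {Rules : Set (CondRule Sig)} {a : Sig → ℕ} {S : Set (Tm Sig)}

open Relation

theorem CondStable.betaStar (hS : CondStable Rules a S) {t u : Tm Sig}
    (h : ReflTransGen Beta t u) (ht : t ∈ S) : u ∈ S := by
  induction h with
  | refl => exact ht
  | tail _ h ih => exact hS.2.1 _ ih _ (Or.inl h)

theorem CondStable.condRel (hS : CondStable Rules a S) {i : ℕ} {t u : Tm Sig}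
    (h : CondRel Rules i t u) (ht : t ∈ S) : u ∈ S := by
  cases i with
  | zero => exact h.elim
  | succ i => exact hS.2.1 _ ht _ (Or.inr (barRel_of_condStep h))

theorem CondStable.bCondRel (hS : CondStable Rules a S) {i : ℕ} {t u : Tm Sig}
    (h : Beta t u ∨ BCondRel Rules i t u) (ht : t ∈ S) : u ∈ S := by
  rcases h with h | h
  · exact hS.2.1 _ ht _ (Or.inl h)
  · cases i with
    | zero => exact h.elim
    | succ i => exact hS.2.1 _ ht _ (Or.inr (barRel_of_condStep h))

theorem condRel_star_dev_iter (hsc : SemiClosed Rules) (hll : LeftLinear Rules)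
    (halg : AlgebraicSys Rules) (harr : SysRespectsArity a Rules) (hS : CondStable Rules a S)
    {i : ℕ} (k : ℕ) : ∀ {t u : Tm Sig}, t ∈ S → ReflTransGen (CondRel Rules i) t u →
    ReflTransGen (CondRel Rules i) (dev^[k] t) (dev^[k] u) := by
  induction k with
  | zero => intro t u _ h; exact h
  | succ k ih =>
    intro t u ht h
    simp only [Function.iterate_succ_apply]
    refine ih (hS.betaStar (par_dev t).betaStar ht) ?_
    suffices ReflTransGen (CondRel Rules i) (dev t) (dev u) ∧ u ∈ S from this.1
    induction h with
    | refl => exact ⟨.refl, ht⟩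
    | tail _ h ih' =>
      exact ⟨ih'.1.trans (condRel_dev hsc hll halg harr h (hS.1 _ ih'.2)), hS.condRel h ih'.2⟩

/-- `t` projects to `u` in stratum `i`: `t →β* t' →*_{R_i} u' ←β* u` for some `t'`, `u'`. -/
def Proj (Rules : Set (CondRule Sig)) (i : ℕ) (t u : Tm Sig) : Prop :=
  ∃ t' u', ReflTransGen Beta t t' ∧ ReflTransGen (CondRel Rules i) t' u' ∧
    ReflTransGen Beta u u'

theorem Proj.trans (hsc : SemiClosed Rules) (hll : LeftLinear Rules)
    (halg : AlgebraicSys Rules) (harr : SysRespectsArity a Rules) (hS : CondStable Rules a S)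
    {i : ℕ} {t u w : Tm Sig} (ht : t ∈ S) (h1 : Proj Rules i t u) (h2 : Proj Rules i u w) :
    Proj Rules i t w := by
  obtain ⟨t', u', htt', htu, huu'⟩ := h1
  obtain ⟨u₁, w₁, huu₁, huw, hww₁⟩ := h2
  -- A development of `u` of large enough depth is a β-reduct of `u₁`, hence so is that of `u'`.
  obtain ⟨k, hk⟩ := dev_cofinal huu₁
  obtain ⟨y, hy1, hy2⟩ :=
    (parComm hsc hll halg i).star_star (hk.trans (dev_iter_mono huu' k)) huw
  exact ⟨dev^[k] t', y, htt'.trans (betaStar_dev_iter t' k),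
    (condRel_star_dev_iter hsc hll halg harr hS k (hS.betaStar htt' ht) htu).trans hy1,
    hww₁.trans hy2⟩

/-- Finitely many conditions that each become joinable after some number of developments of the
substitution are joinable simultaneously after a common number of developments. -/
theorem exists_common_dev (hsc : SemiClosed Rules) (hll : LeftLinear Rules)
    (halg : AlgebraicSys Rules) {i : ℕ} {ρ : CondRule Sig} (hρ : ρ ∈ Rules) (σ : ℕ → Tm Sig)
    (ps : List (Tm Sig × Tm Sig)) (hps : ∀ p ∈ ps, p ∈ ρ.conds)
    (h : ∀ p ∈ ps, ∃ k, Joinable (CondRel Rules i) (Tm.subst (fun n => dev^[k] (σ n)) p.1)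
      (Tm.subst (fun n => dev^[k] (σ n)) p.2)) :
    ∃ k, ∀ p ∈ ps, Joinable (CondRel Rules i) (Tm.subst (fun n => dev^[k] (σ n)) p.1)
      (Tm.subst (fun n => dev^[k] (σ n)) p.2) := by
  choose! k hk using h
  refine ⟨(ps.map k).sum, fun p hp => ?_⟩
  obtain ⟨m, hm⟩ := Nat.exists_eq_add_of_le
    (List.single_le_sum (fun _ _ => Nat.zero_le _) (k p) (List.mem_map_of_mem hp))
  refine (parComm hsc hll halg i).conds hsc halg hρ (hps p hp) (fun n => ?_) (hk p hp)
  rw [hm, Nat.add_comm, Function.iterate_add_apply]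
  exact betaStar_dev_iter _ m

theorem proj_star (hsc : SemiClosed Rules) (hll : LeftLinear Rules)
    (halg : AlgebraicSys Rules) (harr : SysRespectsArity a Rules) (hS : CondStable Rules a S)
    {i : ℕ} (hstep : ∀ {t u : Tm Sig}, t ∈ S → BCondRel Rules i t u → Proj Rules i t u)
    {t u : Tm Sig} (ht : t ∈ S)
    (h : ReflTransGen (fun x y => Beta x y ∨ BCondRel Rules i x y) t u) :
    Proj Rules i t u := by
  suffices Proj Rules i t u ∧ u ∈ S from this.1
  induction h with
  | refl => exact ⟨⟨t, t, .refl, .refl, .refl⟩, ht⟩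
  | @tail u w _ h ih =>
    refine ⟨ih.1.trans hsc hll halg harr hS ht ?_, hS.bCondRel h ih.2⟩
    rcases h with h | h
    · exact ⟨w, w, .single h, .refl, .refl⟩
    · exact hstep ih.2 h

theorem proj_step (hsc : SemiClosed Rules) (hll : LeftLinear Rules)
    (halg : AlgebraicSys Rules) (harr : SysRespectsArity a Rules) (hS : CondStable Rules a S)
    (i : ℕ) : ∀ {t u : Tm Sig}, t ∈ S → BCondRel Rules i t u → Proj Rules i t u := by
  induction i with
  | zero => intro t u _ h; exact h.elim
  | succ i IH =>
    intro t u ht h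
    replace h := cStep_of_condStep (isRewrite_union Rules i) h
    have hR := isRewrite_condRel Rules (i + 1)
    have hB := isRewrite_beta (Sig := Sig)
    induction h with
    | abs _ ih =>
      obtain ⟨t', u', h1, h2, h3⟩ := ih (hS.2.2 _ ht _ (.lam (.refl _)))
      exact ⟨_, _, hB.star_abs h1, hR.star_abs h2, hB.star_abs h3⟩
    | appL v _ ih =>
      obtain ⟨t', u', h1, h2, h3⟩ := ih (hS.2.2 _ ht _ (.appL (.refl _)))
      exact ⟨_, _, hB.star_app h1 .refl, hR.star_app h2 .refl, hB.star_app h3 .refl⟩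
    | appR v _ ih =>
      obtain ⟨t', u', h1, h2, h3⟩ := ih (hS.2.2 _ ht _ (.appR (.refl _)))
      exact ⟨_, _, hB.star_app .refl h1, hR.star_app .refl h2, hB.star_app .refl h3⟩
    | @rule ρ hρ σ hc t u htl hur =>
      subst htl hur
      obtain ⟨k, hk⟩ := exists_common_dev (i := i) hsc hll halg hρ σ ρ.conds (fun _ hp => hp) <| by
        intro p hp
        obtain ⟨v, hv1, hv2⟩ := hc p hp
        obtain ⟨hca, hcc⟩ := hsc ρ hρ p hp
        obtain ⟨hcv, hva⟩ := applicative_project halg i hv2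
          (Applicative.subst hca fun n hn => absurd hn (hcc n))
        -- The instance of `p.1` belongs to `S` because `ρ.lhs ↦ p.1` is a rule of `R̄`.
        obtain ⟨d', v', hd, hdv, hvv⟩ := proj_star hsc hll halg harr hS IH
          (hS.2.1 _ ht _ (Or.inr (.ruleCond hρ hp σ))) hv1
        rw [betaStar_applicative hvv hva] at hdv
        obtain ⟨k, hk⟩ := dev_cofinal hd
        obtain ⟨w, hw1, hw2⟩ := (parComm hsc hll halg i).star_star hk hdv
        rw [betaStar_applicative hw2 hva,
          dev_iter_subst (Algebraic.neu ((halg ρ hρ).1 p hp).1)] at hw1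
        exact ⟨k, v, hw1, by rwa [closed_subst hcc _ σ]⟩
      exact ⟨_, _, hB.star_subst_pt _ fun n => betaStar_dev_iter (σ n) k,
        .single (CondStep.rule hρ _ hk), hB.star_subst_pt _ fun n => betaStar_dev_iter (σ n) k⟩

end Projection

/-- For a semi-closed, left-linear, algebraic system `R` respecting the
arity `a` and a conditionally `(R,a)`-stable set `S`: for every `i` and `t, u ∈ S`,
if `t →*_{β ∪ R(β)_i} u` then `t →β* t' →*_{R_i} u' ←β* u` for some `t'`, `u'`. -/
theorem bcond_projects_to_cond {Sig : Type} (a : Sig → ℕ) (Rules : Set (CondRule Sig))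
    (hsc : SemiClosed Rules) (hll : LeftLinear Rules) (halg : AlgebraicSys Rules)
    (harr : SysRespectsArity a Rules)
    (S : Set (Tm Sig)) (hS : CondStable Rules a S)
    (i : ℕ) (t u : Tm Sig) (ht : t ∈ S) (hu : u ∈ S)
    (hred : Relation.ReflTransGen (fun x y : Tm Sig => Beta x y ∨ BCondRel Rules i x y) t u) :
    ∃ t' u', Relation.ReflTransGen Beta t t' ∧
      Relation.ReflTransGen (CondRel Rules i) t' u' ∧
      Relation.ReflTransGen Beta u u' := by
  exact proj_star hsc hll halg harr hS (proj_step hsc hll halg harr hS i) ht hred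
end
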